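/- arXiv:2006.05417 — 5 statements merged into one kernel-verified Lean document; each statement's English description precedes it below -/
import Mathlib

section
/- Fix an integer r ≥ 1. There exists a constant C > 0 such that for every real number x ≥ 1, the family of terms 1/(φ([n_1,…,n_r])·n_1·n_2⋯n_r), indexed by multi-indices N = (n_1,…,n_r) of positive integers with n_1 > x, is summable and its sum is at most C/x. -/
open scoped BigOperators

/-- The general term `1/(φ([n_1,…,n_r])·n_1⋯n_r)` associated to a multi-index
`N = (n_1,…,n_r)` of positive integers. -/
noncomputable def eulerTerm (r : ℕ) (N : Fin r → ℕ+) : ℝ :=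
  1 / ((Nat.totient (Finset.univ.lcm fun i => (N i : ℕ)) : ℝ) * ∏ i, ((N i : ℕ) : ℝ))

open scoped ENNReal

/-- `σ(n)/n` as a sum of reciprocals of divisors. -/
noncomputable def hh (n : ℕ) : ℝ≥0∞ := ∑' d : ℕ+, if (d : ℕ) ∣ n then ((d : ℕ) : ℝ≥0∞)⁻¹ else 0

lemma hh_mono {m n : ℕ} (h : m ∣ n) : hh m ≤ hh n := by
  refine ENNReal.tsum_le_tsum fun d => ?_
  by_cases hd : (d : ℕ) ∣ m
  · simp [hd, hd.trans h]
  · simp [hd]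

lemma one_le_hh (n : ℕ) : 1 ≤ hh n := by
  have := ENNReal.le_tsum (f := fun d : ℕ+ => if (d : ℕ) ∣ n then ((d : ℕ) : ℝ≥0∞)⁻¹ else 0) 1
  simpa [hh] using this

lemma cast_ne (d : ℕ+) : ((d : ℕ) : ℝ≥0∞) ≠ 0 := by simp

lemma hh_mul (m n : ℕ) (hm : 0 < m) (hn : 0 < n) : hh (m * n) ≤ hh m * hh n := by
  set F : ℕ → ℕ+ → ℝ≥0∞ := fun m d => if (d : ℕ) ∣ m then ((d : ℕ) : ℝ≥0∞)⁻¹ else 0 with hF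
  have key : ∀ d : ℕ+, F (m * n) d ≤ ∑' p : ℕ+ × ℕ+, if d = p.1 * p.2 then F m p.1 * F n p.2 else 0 := by
    intro d
    by_cases hd : (d : ℕ) ∣ m * n
    · obtain ⟨a, b, ha, hb, hab⟩ := exists_dvd_and_dvd_of_dvd_mul hd
      have ha0 := Nat.pos_of_dvd_of_pos ha hm
      have hb0 := Nat.pos_of_dvd_of_pos hb hn
      lift a to ℕ+ using ha0
      lift b to ℕ+ using hb0
      have hE : d = a * b := PNat.eq hab
      refine le_trans ?_ (ENNReal.le_tsum (a, b))
      simp only [hF, hd, if_true, if_pos hE, ha, hb]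
      rw [← ENNReal.mul_inv (by simp) (by simp), hab]
      simp
    · simp [hF, hd]
  calc hh (m * n) = ∑' d, F (m * n) d := rfl
    _ ≤ ∑' d, ∑' p : ℕ+ × ℕ+, if d = p.1 * p.2 then F m p.1 * F n p.2 else 0 :=
        ENNReal.tsum_le_tsum key
    _ = ∑' p : ℕ+ × ℕ+, F m p.1 * F n p.2 := by
        rw [ENNReal.tsum_comm]
        simp
    _ = hh m * hh n := by
        rw [ENNReal.tsum_prod (f := fun a b => F m a * F n b)]
        simp only [ENNReal.tsum_mul_left, ENNReal.tsum_mul_right]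
        rfl

lemma hh_lcm (m n : ℕ) (hm : 0 < m) (hn : 0 < n) : hh (Nat.lcm m n) ≤ hh m * hh n :=
  (hh_mono (Nat.lcm_dvd_mul m n)).trans (hh_mul m n hm hn)

lemma tsum_dvd (d : ℕ+) (f : ℕ → ℝ≥0∞) :
    (∑' n : ℕ+, if (d : ℕ) ∣ n then f n else 0) = ∑' j : ℕ+, f (d * j) := by
  have hinj : Function.Injective (fun j : ℕ+ => d * j) := fun a b h => by simpa using h
  rw [← hinj.tsum_eq]
  · simp
  · intro n hn
    simp only [Function.mem_support, ne_eq, ite_eq_right_iff, Classical.not_imp] at hn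
    obtain ⟨j, hj⟩ := PNat.dvd_iff.2 hn.1
    exact ⟨j, hj.symm⟩

lemma cube_le (n : ℕ) : n ^ 3 ≤ Nat.totient n * (ArithmeticFunction.sigma 1 n) ^ 2 := by
  induction n using Nat.recOnPosPrimePosCoprime with
  | zero => simp
  | one => simp
  | prime_pow p n hp hn =>
    obtain ⟨k, rfl⟩ : ∃ k, n = k + 1 := ⟨n - 1, by omega⟩
    have h1 : p ^ k * (p + 1) ≤ ArithmeticFunction.sigma 1 (p ^ (k + 1)) := by
      rw [ArithmeticFunction.sigma_one_apply_prime_pow hp, Finset.sum_range_succ, Finset.sum_range_succ]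
      have : p ^ k * (p + 1) = p ^ k + p ^ (k + 1) := by ring
      omega
    rw [Nat.totient_prime_pow_succ hp]
    obtain ⟨q, rfl⟩ : ∃ q, p = q + 2 := ⟨p - 2, by have := hp.two_le; omega⟩
    calc ((q + 2) ^ (k + 1)) ^ 3 = ((q + 2) ^ k) ^ 3 * (q + 2) ^ 3 := by ring
      _ ≤ ((q + 2) ^ k) ^ 3 * ((q + 1) * (q + 3) ^ 2) := by
          gcongr
          nlinarith [sq_nonneg q]
      _ = (q + 2) ^ k * (q + 2 - 1) * ((q + 2) ^ k * (q + 2 + 1)) ^ 2 := by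
          simp only [show q + 2 - 1 = q + 1 by omega]; ring
      _ ≤ _ := by gcongr
  | coprime a b ha hb hab iha ihb =>
    rw [Nat.totient_mul hab, ArithmeticFunction.isMultiplicative_sigma.map_mul_of_coprime hab]
    calc (a * b) ^ 3 = a ^ 3 * b ^ 3 := by ring
      _ ≤ _ := Nat.mul_le_mul iha ihb
      _ = _ := by ring

lemma sigma_le (n : ℕ) (hn : 0 < n) : (ArithmeticFunction.sigma 1 n : ℝ≥0∞) ≤ n * hh n := by
  rw [ArithmeticFunction.sigma_one_apply, ← Nat.sum_div_divisors n (fun d => d)]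
  have h1 : hh n = ∑' d : ℕ, if d ∈ n.divisors then (d : ℝ≥0∞)⁻¹ else 0 := by
    have hinj : Function.Injective (fun j : ℕ+ => (j : ℕ)) := PNat.coe_injective
    rw [← hinj.tsum_eq]
    · simp [hh, hn.ne']
    · intro d hd
      simp only [Function.mem_support, ne_eq, ite_eq_right_iff, Classical.not_imp] at hd
      exact ⟨⟨d, Nat.pos_of_mem_divisors hd.1⟩, rfl⟩
  rw [h1, tsum_eq_sum (s := n.divisors) (by intro b hb; simp [hb]), Finset.mul_sum]
  push_cast
  refine Finset.sum_le_sum fun d hd => ?_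
  rw [if_pos hd, ← div_eq_mul_inv]
  have hd0 := Nat.pos_of_mem_divisors hd
  rw [ENNReal.le_div_iff_mul_le (by simp [hd0.ne']) (by simp)]
  exact_mod_cast Nat.div_mul_le_self n d

lemma inv_totient_le (n : ℕ) (hn : 0 < n) :
    ((Nat.totient n : ℕ) : ℝ≥0∞)⁻¹ ≤ hh n ^ 2 * (n : ℝ≥0∞)⁻¹ := by
  have h1 : (n : ℝ≥0∞) ^ 3 ≤ Nat.totient n * (n * hh n) ^ 2 := by
    calc (n : ℝ≥0∞) ^ 3 ≤ (Nat.totient n : ℝ≥0∞) * (ArithmeticFunction.sigma 1 n : ℝ≥0∞) ^ 2 := by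
          exact_mod_cast cube_le n
      _ ≤ _ := by gcongr; exact sigma_le n hn
  have ht : (Nat.totient n : ℝ≥0∞) ≠ 0 := by simpa using hn.ne'
  have hn0 : (n : ℝ≥0∞) ≠ 0 := by simpa using hn.ne'
  have hnt : (n : ℝ≥0∞) ≠ ⊤ := by simp
  have h2 : (n : ℝ≥0∞) ≤ Nat.totient n * hh n ^ 2 := by
    have : (n : ℝ≥0∞) ^ 2 * n ≤ (n : ℝ≥0∞) ^ 2 * (Nat.totient n * hh n ^ 2) := by
      calc _ = (n : ℝ≥0∞) ^ 3 := by ring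
        _ ≤ _ := h1
        _ = _ := by ring
    rwa [ENNReal.mul_le_mul_iff_right (by simp [hn.ne']) (by simp)] at this
  rw [← div_eq_mul_inv, ENNReal.le_div_iff_mul_le (by simp [hn.ne']) (by simp)]
  calc _ ≤ ((Nat.totient n : ℕ) : ℝ≥0∞)⁻¹ * (Nat.totient n * hh n ^ 2) := by gcongr
    _ = _ := by rw [← mul_assoc, ENNReal.inv_mul_cancel ht (by simp), one_mul]

lemma tail_sq (x : ℝ) (hx : 0 < x) :
    (∑' j : ℕ+, if x < ((j : ℕ) : ℝ) then (((j : ℕ) : ℝ≥0∞) ^ 2)⁻¹ else 0) ≤ ENNReal.ofReal (2 / x) := by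
  rw [ENNReal.tsum_eq_iSup_sum]
  refine iSup_le fun s => ?_
  have h1 : ∀ j : ℕ+, (if x < ((j : ℕ) : ℝ) then (((j : ℕ) : ℝ≥0∞) ^ 2)⁻¹ else 0)
      = ENNReal.ofReal (if x < ((j : ℕ) : ℝ) then (((j : ℕ) : ℝ) ^ 2)⁻¹ else 0) := by
    intro j
    split_ifs
    · rw [ENNReal.ofReal_inv_of_pos (by positivity), ENNReal.ofReal_pow (by positivity)]
      simp
    · simp
  simp only [h1]
  rw [← ENNReal.ofReal_sum_of_nonneg (by intros; positivity)]
  apply ENNReal.ofReal_le_ofReal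
  rw [← Finset.sum_filter]
  set t := s.filter (fun j : ℕ+ => x < ((j : ℕ) : ℝ))
  obtain ⟨M, hM⟩ := (t.image (fun j : ℕ+ => (j : ℕ))).bddAbove
  have h2 : ∑ j ∈ t, (((j : ℕ) : ℝ) ^ 2)⁻¹ = ∑ j ∈ t.image (fun j : ℕ+ => (j : ℕ)), ((j : ℝ) ^ 2)⁻¹ := by
    rw [Finset.sum_image]
    intro a _ b _ h
    exact PNat.eq h
  rw [h2]
  calc _ ≤ ∑ j ∈ Finset.Ioo ⌊x⌋₊ (M + 1), ((j : ℝ) ^ 2)⁻¹ := by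
        refine Finset.sum_le_sum_of_subset_of_nonneg ?_ (by intros; positivity)
        intro j hj
        have h3 := hM hj
        obtain ⟨i, hi, rfl⟩ := Finset.mem_image.1 hj
        have h4 := (Finset.mem_filter.1 hi).2
        simp only [Finset.mem_Ioo]
        exact ⟨(Nat.floor_lt hx.le).2 h4, by omega⟩
    _ ≤ 2 / (⌊x⌋₊ + 1) := sum_Ioo_inv_sq_le _ _
    _ ≤ 2 / x := by
        gcongr
        exact (Nat.lt_floor_add_one x).le

lemma tail_sq_dvd (x : ℝ) (hx : 0 < x) (d : ℕ+) :
    (∑' n : ℕ+, if (d : ℕ) ∣ n then (if x < ((n : ℕ) : ℝ) then (((n : ℕ) : ℝ≥0∞) ^ 2)⁻¹ else 0) else 0)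
      ≤ ENNReal.ofReal (2 / x) * ((d : ℕ) : ℝ≥0∞)⁻¹ := by
  rw [tsum_dvd d (fun n => if x < (n : ℝ) then ((n : ℝ≥0∞) ^ 2)⁻¹ else 0)]
  have hd : (0 : ℝ) < ((d : ℕ) : ℝ) := by exact_mod_cast d.pos
  have h1 : ∀ j : ℕ+, (if x < ((d * j : ℕ) : ℝ) then (((d * j : ℕ) : ℝ≥0∞) ^ 2)⁻¹ else 0)
     = (((d : ℕ) : ℝ≥0∞) ^ 2)⁻¹ * (if x / (d : ℕ) < ((j : ℕ) : ℝ) then (((j : ℕ) : ℝ≥0∞) ^ 2)⁻¹ else 0) := by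
    intro j
    have : x < ((d * j : ℕ) : ℝ) ↔ x / (d : ℕ) < ((j : ℕ) : ℝ) := by
      rw [div_lt_iff₀ hd]; push_cast; rw [mul_comm]
    simp only [this]
    split_ifs
    · rw [← ENNReal.mul_inv (by simp) (by simp)]
      push_cast; rw [mul_pow]
    · simp
  simp only [h1]
  rw [ENNReal.tsum_mul_left]
  calc _ ≤ (((d : ℕ) : ℝ≥0∞) ^ 2)⁻¹ * ENNReal.ofReal (2 / (x / (d : ℕ))) := by
        gcongr
        exact tail_sq _ (by positivity)
    _ = _ := by
        rw [show 2 / (x / ((d : ℕ) : ℝ)) = 2 / x * (d : ℕ) by field_simp,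
          ENNReal.ofReal_mul (by positivity), ENNReal.ofReal_natCast, pow_two,
          ENNReal.mul_inv (by simp) (by simp)]
        rw [show ∀ a b c : ℝ≥0∞, a * a * (b * c) = b * a * (a * c) by intros; ring,
          ENNReal.inv_mul_cancel (cast_ne d) (by simp), mul_one]

lemma zeta_fin (s : ℝ) (hs : 1 < s) : (∑' d : ℕ+, ((d : ℕ) : ℝ≥0∞) ^ (-s)) ≠ ⊤ := by
  have h := (Real.summable_nat_rpow (p := -s)).2 (by linarith)
  have h2 : Summable (fun d : ℕ+ => ((d : ℕ) : ℝ) ^ (-s)) := h.comp_injective PNat.coe_injective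
  have h3 := h2.tsum_ofReal_ne_top
  convert h3 using 3 with d
  rw [← ENNReal.ofReal_rpow_of_pos (by exact_mod_cast d.pos)]
  simp

lemma hh_pow_le (k : ℕ) : ∃ C : ℝ≥0∞, C ≠ ⊤ ∧ ∀ n : ℕ, hh n ^ k ≤
    C * ∑' d : ℕ+, if (d : ℕ) ∣ n then ((d : ℕ) : ℝ≥0∞) ^ (-(1/2) : ℝ) else 0 := by
  rcases Nat.eq_zero_or_pos k with rfl | hk
  · refine ⟨1, by simp, fun n => ?_⟩
    have := ENNReal.le_tsum (f := fun d : ℕ+ => if (d : ℕ) ∣ n then ((d : ℕ) : ℝ≥0∞) ^ (-(1/2) : ℝ) else 0) 1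
    simpa using this
  have hk1 : (1 : ℝ) ≤ k := by exact_mod_cast hk
  have hk0 : (0 : ℝ) < k := by linarith
  set e : ℝ := 1 / (2 * k) with he
  have he0 : 0 < e := by positivity
  set Z := ∑' d : ℕ+, ((d : ℕ) : ℝ≥0∞) ^ (-(1 + e)) with hZ
  have hp : (0 : ℝ) ≤ 1 - (k : ℝ)⁻¹ := by
    have := inv_le_one_of_one_le₀ hk1
    linarith
  refine ⟨(Z ^ (1 - (k : ℝ)⁻¹)) ^ k, ?_, fun n => ?_⟩
  · exact ENNReal.pow_ne_top (ENNReal.rpow_ne_top_of_nonneg hp (zeta_fin _ (by linarith)))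
  set A := ∑' d : ℕ+, if (d : ℕ) ∣ n then ((d : ℕ) : ℝ≥0∞) ^ (-(1/2) : ℝ) else 0 with hA
  have h1 : hh n ≤ Z ^ (1 - (k : ℝ)⁻¹) * A ^ (k : ℝ)⁻¹ := by
    rw [hh, ENNReal.tsum_eq_iSup_sum]
    refine iSup_le fun s => ?_
    have h2 := ENNReal.inner_le_weight_mul_Lp_of_nonneg s hk1
      (fun d : ℕ+ => ((d : ℕ) : ℝ≥0∞) ^ (-(1 + e)))
      (fun d : ℕ+ => if (d : ℕ) ∣ n then ((d : ℕ) : ℝ≥0∞) ^ e else 0)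
    refine le_trans (le_of_eq ?_) (h2.trans ?_)
    · refine Finset.sum_congr rfl fun d _ => ?_
      split_ifs
      · rw [← ENNReal.rpow_add _ _ (cast_ne d) (by simp), ← ENNReal.rpow_neg_one]
        congr 1; ring
      · simp
    · gcongr
      · exact ENNReal.sum_le_tsum s
      · refine le_trans (Finset.sum_le_sum fun d _ => ?_) (ENNReal.sum_le_tsum s)
        split_ifs
        · rw [← ENNReal.rpow_mul, ← ENNReal.rpow_add _ _ (cast_ne d) (by simp)]
          apply ENNReal.rpow_le_rpow_of_exponent_le
          · exact_mod_cast d.pos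
          · have : e * k = 1 / 2 := by rw [he]; field_simp
            linarith
        · simp [hk.ne']
  calc hh n ^ k ≤ (Z ^ (1 - (k : ℝ)⁻¹) * A ^ (k : ℝ)⁻¹) ^ k := by gcongr
    _ = _ := by
      rw [mul_pow]
      congr 1
      rw [← ENNReal.rpow_natCast, ← ENNReal.rpow_mul, inv_mul_cancel₀ hk0.ne', ENNReal.rpow_one]

lemma tail_hh (k : ℕ) : ∃ C : ℝ≥0∞, C ≠ ⊤ ∧ ∀ x : ℝ, 0 < x →
    (∑' n : ℕ+, if x < ((n : ℕ) : ℝ) then hh n ^ k * (((n : ℕ) : ℝ≥0∞) ^ 2)⁻¹ else 0)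
      ≤ C * ENNReal.ofReal (2 / x) := by
  obtain ⟨C, hC, h⟩ := hh_pow_le k
  refine ⟨C * ∑' d : ℕ+, ((d : ℕ) : ℝ≥0∞) ^ (-(3/2) : ℝ), ENNReal.mul_ne_top hC (zeta_fin _ (by norm_num)), fun x hx => ?_⟩
  set W : ℕ+ → ℝ≥0∞ := fun n => if x < ((n : ℕ) : ℝ) then (((n : ℕ) : ℝ≥0∞) ^ 2)⁻¹ else 0 with hW
  calc _ ≤ ∑' n : ℕ+, C * ∑' d : ℕ+, (((d : ℕ) : ℝ≥0∞) ^ (-(1/2) : ℝ) * if (d : ℕ) ∣ n then W n else 0) := by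
        refine ENNReal.tsum_le_tsum fun n => ?_
        by_cases hn : x < ((n : ℕ) : ℝ)
        · simp only [hW, hn, if_true]
          refine (mul_le_mul_left (h n) _).trans (le_of_eq ?_)
          rw [mul_assoc, ← ENNReal.tsum_mul_right]
          congr 1
          refine tsum_congr fun d => ?_
          split_ifs <;> simp
        · simp [hn]
    _ = C * ∑' d : ℕ+, (((d : ℕ) : ℝ≥0∞) ^ (-(1/2) : ℝ) * ∑' n : ℕ+, if (d : ℕ) ∣ n then W n else 0) := by
        rw [ENNReal.tsum_mul_left, ENNReal.tsum_comm]
        simp only [ENNReal.tsum_mul_left]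
    _ ≤ C * ∑' d : ℕ+, (((d : ℕ) : ℝ≥0∞) ^ (-(1/2) : ℝ) * (ENNReal.ofReal (2 / x) * ((d : ℕ) : ℝ≥0∞)⁻¹)) := by
        gcongr with d
        exact tail_sq_dvd x hx d
    _ = _ := by
        rw [mul_assoc, ← ENNReal.tsum_mul_right]
        congr 1
        refine tsum_congr fun d => ?_
        rw [← ENNReal.rpow_neg_one, mul_left_comm, ← ENNReal.rpow_add _ _ (cast_ne d) (by simp), mul_comm]
        congr 2; norm_num

lemma step (k : ℕ) : ∃ C : ℝ≥0∞, C ≠ ⊤ ∧ ∀ m : ℕ, 0 < m →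
    (∑' n : ℕ+, hh (Nat.lcm m n) ^ k * ((Nat.lcm m n : ℕ) : ℝ≥0∞)⁻¹ * ((n : ℕ) : ℝ≥0∞)⁻¹)
      ≤ C * (hh m ^ (2 * k + 1) * (m : ℝ≥0∞)⁻¹) := by
  obtain ⟨C, hC, h⟩ := tail_hh k
  set S : ℝ≥0∞ := ∑' n : ℕ+, hh n ^ k * (((n : ℕ) : ℝ≥0∞) ^ 2)⁻¹ with hS
  have hST : S ≠ ⊤ := by
    have h1 := h (1 / 2) (by norm_num)
    refine ne_top_of_le_ne_top (ENNReal.mul_ne_top hC ENNReal.ofReal_ne_top) (le_trans (le_of_eq ?_) h1)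
    refine tsum_congr fun n => ?_
    have : (1 : ℝ) ≤ ((n : ℕ) : ℝ) := by exact_mod_cast n.pos
    rw [if_pos (by linarith)]
  refine ⟨S, hST, fun m hm => ?_⟩
  have hm0 : (m : ℝ≥0∞) ≠ 0 := by simpa using hm.ne'
  set P : ℝ≥0∞ := hh m ^ k * (m : ℝ≥0∞)⁻¹ with hP
  set V : ℕ → ℝ≥0∞ := fun n => hh n ^ k * ((n : ℝ≥0∞) ^ 2)⁻¹ with hV
  have hin : ∀ d : ℕ+, (∑' n : ℕ+, if (d : ℕ) ∣ n then V n else 0) ≤ V d * S := by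
    intro d
    rw [tsum_dvd, hS, ← ENNReal.tsum_mul_left]
    refine ENNReal.tsum_le_tsum fun j => ?_
    calc V (d * j) ≤ (hh d * hh j) ^ k * (((d : ℕ) : ℝ≥0∞) ^ 2 * ((j : ℕ) : ℝ≥0∞) ^ 2)⁻¹ := by
          simp only [hV]
          push_cast
          rw [mul_pow ((d : ℕ) : ℝ≥0∞)]
          gcongr
          exact hh_mul _ _ d.pos j.pos
      _ = _ := by
          rw [ENNReal.mul_inv (by simp) (by simp)]
          simp only [hV]; ring
  calc _ ≤ ∑' n : ℕ+, P * ∑' d : ℕ+, (if (d : ℕ) ∣ m then ((d : ℕ) : ℝ≥0∞) else 0) *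
            (if (d : ℕ) ∣ n then V n else 0) := by
        refine ENNReal.tsum_le_tsum fun n => ?_
        have hn0 := cast_ne n
        have hg : 0 < Nat.gcd m n := Nat.gcd_pos_of_pos_left _ hm
        have hl0 : 0 < Nat.lcm m n := Nat.lcm_pos hm n.pos
        have hl : ((Nat.lcm m n : ℕ) : ℝ≥0∞)⁻¹ = (Nat.gcd m n : ℕ) * ((m : ℝ≥0∞)⁻¹ * ((n : ℕ) : ℝ≥0∞)⁻¹) := by
          have h1 : ((Nat.gcd m n : ℕ) : ℝ≥0∞) * (Nat.lcm m n : ℕ) = m * (n : ℕ) := by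
            exact_mod_cast Nat.gcd_mul_lcm m n
          rw [← ENNReal.mul_inv (by simp) (by simp), ← h1, ENNReal.mul_inv (by simp) (by simp),
            ← mul_assoc, ENNReal.mul_inv_cancel (by exact_mod_cast hg.ne') (by simp), one_mul]
        have h2 := ENNReal.le_tsum (f := fun d : ℕ+ => (if (d : ℕ) ∣ m then ((d : ℕ) : ℝ≥0∞) else 0) *
            (if (d : ℕ) ∣ n then V n else 0)) ⟨Nat.gcd m n, hg⟩
        simp only [PNat.mk_coe, Nat.gcd_dvd_left, Nat.gcd_dvd_right, if_true] at h2
        calc _ ≤ (hh m * hh n) ^ k * ((Nat.lcm m n : ℕ) : ℝ≥0∞)⁻¹ * ((n : ℕ) : ℝ≥0∞)⁻¹ := by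
              gcongr
              exact hh_lcm m n hm n.pos
          _ = P * ((Nat.gcd m n : ℕ) * V n) := by
              rw [hl]
              simp only [hP, hV, pow_two]
              rw [ENNReal.mul_inv (by simp) (by simp)]
              ring
          _ ≤ _ := by gcongr
    _ = P * ∑' d : ℕ+, (if (d : ℕ) ∣ m then ((d : ℕ) : ℝ≥0∞) else 0) *
            ∑' n : ℕ+, (if (d : ℕ) ∣ n then V n else 0) := by
        rw [ENNReal.tsum_mul_left, ENNReal.tsum_comm]
        simp only [ENNReal.tsum_mul_left]
    _ ≤ P * ∑' d : ℕ+, (if (d : ℕ) ∣ m then ((d : ℕ) : ℝ≥0∞)⁻¹ else 0) * (hh m ^ k * S) := by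
        refine mul_le_mul_right (ENNReal.tsum_le_tsum fun d => ?_) _
        by_cases hd : (d : ℕ) ∣ m
        · simp only [hd, if_true]
          calc _ ≤ ((d : ℕ) : ℝ≥0∞) * (V d * S) := mul_le_mul_right (hin d) _
            _ = ((d : ℕ) : ℝ≥0∞)⁻¹ * (hh d ^ k * S) := by
                simp only [hV, pow_two]
                rw [ENNReal.mul_inv (by simp) (by simp)]
                rw [show ∀ a b c e : ℝ≥0∞, a * (c * (b * b) * e) = (a * b) * (b * (c * e)) by intros; ring,
                  ENNReal.mul_inv_cancel (cast_ne d) (by simp), one_mul]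
            _ ≤ ((d : ℕ) : ℝ≥0∞)⁻¹ * (hh m ^ k * S) := by gcongr; exact hh_mono hd
        · simp [hd]
    _ = _ := by
        rw [ENNReal.tsum_mul_right]
        change P * (hh m * _) = _
        simp only [hP]
        ring

lemma lcm_cons (r : ℕ) (n : ℕ+) (N : Fin r → ℕ+) :
    (Finset.univ.lcm fun i => ((Fin.cons (α := fun _ => ℕ+) n N i : ℕ+) : ℕ))
      = Nat.lcm n (Finset.univ.lcm fun i => (N i : ℕ)) := by
  apply Nat.dvd_antisymm
  · refine Finset.lcm_dvd fun i _ => ?_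
    refine Fin.cases ?_ (fun j => ?_) i
    · simpa using Nat.dvd_lcm_left _ _
    · simp only [Fin.cons_succ]
      exact (Finset.dvd_lcm (f := fun i => (N i : ℕ)) (Finset.mem_univ j)).trans (Nat.dvd_lcm_right _ _)
  · refine Nat.lcm_dvd ?_ (Finset.lcm_dvd fun j _ => ?_)
    · simpa using Finset.dvd_lcm (f := fun i => ((Fin.cons (α := fun _ => ℕ+) n N i : ℕ+) : ℕ)) (Finset.mem_univ 0)
    · simpa using Finset.dvd_lcm (f := fun i => ((Fin.cons (α := fun _ => ℕ+) n N i : ℕ+) : ℕ)) (Finset.mem_univ j.succ)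

lemma tsum_cons (r : ℕ) (f : (Fin (r + 1) → ℕ+) → ℝ≥0∞) :
    ∑' N, f N = ∑' n : ℕ+, ∑' N : Fin r → ℕ+, f (Fin.cons (α := fun _ => ℕ+) n N) := by
  rw [← (Fin.consEquiv (fun _ : Fin (r + 1) => ℕ+)).tsum_eq, ← ENNReal.tsum_prod]
  rfl

lemma multi (r : ℕ) : ∀ k : ℕ, ∃ C : ℝ≥0∞, C ≠ ⊤ ∧ ∃ K : ℕ, ∀ m : ℕ, 0 < m →
    (∑' N : Fin r → ℕ+, hh (Nat.lcm m (Finset.univ.lcm fun i => (N i : ℕ))) ^ k *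
      ((Nat.lcm m (Finset.univ.lcm fun i => (N i : ℕ)) : ℕ) : ℝ≥0∞)⁻¹ * ∏ i, ((N i : ℕ) : ℝ≥0∞)⁻¹)
      ≤ C * (hh m ^ K * (m : ℝ≥0∞)⁻¹) := by
  induction r with
  | zero =>
    intro k
    refine ⟨1, by simp, k, fun m hm => ?_⟩
    rw [tsum_eq_single default (by intro b hb; exact absurd (Subsingleton.elim _ _) hb)]
    simp
  | succ r ih =>
    intro k
    obtain ⟨C, hC, K, h⟩ := ih k
    obtain ⟨D, hD, h'⟩ := step K
    refine ⟨C * D, ENNReal.mul_ne_top hC hD, 2 * K + 1, fun m hm => ?_⟩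
    rw [tsum_cons]
    simp only [lcm_cons, ← Nat.lcm_assoc, Fin.prod_univ_succ, Fin.cons_zero, Fin.cons_succ]
    calc _ ≤ ∑' n : ℕ+, C * (hh (Nat.lcm m n) ^ K * ((Nat.lcm m n : ℕ) : ℝ≥0∞)⁻¹ * ((n : ℕ) : ℝ≥0∞)⁻¹) := by
          refine ENNReal.tsum_le_tsum fun n => ?_
          have h1 := mul_le_mul_left (h (Nat.lcm m n) (Nat.lcm_pos hm n.pos)) ((n : ℕ) : ℝ≥0∞)⁻¹
          rw [← ENNReal.tsum_mul_right] at h1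
          refine le_trans (le_of_eq ?_) (h1.trans (le_of_eq ?_))
          · refine tsum_congr fun N => ?_
            ring
          · ring
      _ ≤ C * (D * (hh m ^ (2 * K + 1) * (m : ℝ≥0∞)⁻¹)) := by
          rw [ENNReal.tsum_mul_left]
          gcongr
          exact h' m hm
      _ = _ := by ring

lemma ofReal_eulerTerm (r : ℕ) (N : Fin r → ℕ+) : ENNReal.ofReal (eulerTerm r N) =
    ((Nat.totient (Finset.univ.lcm fun i => (N i : ℕ)) : ℕ) : ℝ≥0∞)⁻¹ * ∏ i, ((N i : ℕ) : ℝ≥0∞)⁻¹ := by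
  have hL : 0 < (Finset.univ.lcm fun i => (N i : ℕ)) := by
    rw [Nat.pos_iff_ne_zero, Ne, Finset.lcm_eq_zero_iff]
    simp
  have hp : (0 : ℝ) < (Nat.totient (Finset.univ.lcm fun i => (N i : ℕ)) : ℝ) := by
    exact_mod_cast Nat.totient_pos.2 hL
  have hq : ∀ i, (0 : ℝ) < ((N i : ℕ) : ℝ) := fun i => by exact_mod_cast (N i).pos
  rw [eulerTerm, one_div, mul_inv, ← Finset.prod_inv_distrib, ENNReal.ofReal_mul (by positivity),
    ENNReal.ofReal_inv_of_pos hp, ENNReal.ofReal_prod_of_nonneg (fun i _ => by have := hq i; positivity)]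
  simp only [ENNReal.ofReal_inv_of_pos (hq _), ENNReal.ofReal_natCast]

lemma tail_ennreal (r : ℕ) : ∃ C : ℝ≥0∞, C ≠ ⊤ ∧ ∀ x : ℝ, 1 ≤ x →
    (∑' N : {N : Fin (r + 1) → ℕ+ // x < ((N 0 : ℕ) : ℝ)}, ENNReal.ofReal (eulerTerm (r + 1) N.1))
      ≤ C * ENNReal.ofReal (2 / x) := by
  obtain ⟨C, hC, K, h⟩ := multi r 2
  obtain ⟨D, hD, h'⟩ := tail_hh K
  refine ⟨C * D, ENNReal.mul_ne_top hC hD, fun x hx => ?_⟩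
  have e1 := tsum_subtype {N : Fin (r + 1) → ℕ+ | x < ((N 0 : ℕ) : ℝ)}
    (fun N => ENNReal.ofReal (eulerTerm (r + 1) N))
  refine (le_of_eq e1).trans ?_
  rw [tsum_cons]
  simp only [Set.indicator_apply, Set.mem_ofPred_eq, Fin.cons_zero, ofReal_eulerTerm, lcm_cons,
    Fin.prod_univ_succ, Fin.cons_succ]
  calc _ ≤ ∑' n : ℕ+, C * (if x < ((n : ℕ) : ℝ) then hh n ^ K * (((n : ℕ) : ℝ≥0∞) ^ 2)⁻¹ else 0) := by
        refine ENNReal.tsum_le_tsum fun n => ?_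
        by_cases hn : x < ((n : ℕ) : ℝ)
        · simp only [hn, if_true]
          have h1 := mul_le_mul_left (h n n.pos) ((n : ℕ) : ℝ≥0∞)⁻¹
          rw [← ENNReal.tsum_mul_right] at h1
          refine le_trans (ENNReal.tsum_le_tsum fun N => ?_) (h1.trans (le_of_eq ?_))
          · have hL : 0 < (Finset.univ.lcm fun i => (N i : ℕ)) := by
              rw [Nat.pos_iff_ne_zero, Ne, Finset.lcm_eq_zero_iff]
              simp
            refine (mul_le_mul_left (inv_totient_le _ (Nat.lcm_pos n.pos hL)) _).trans (le_of_eq ?_)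
            ring
          · rw [pow_two, ENNReal.mul_inv (by simp) (by simp)]
            ring
        · simp [hn]
    _ ≤ C * (D * ENNReal.ofReal (2 / x)) := by
        rw [ENNReal.tsum_mul_left]
        gcongr
        exact h' x (by linarith)
    _ = _ := by ring

lemma conv_aux {ι : Type*} (f : ι → ℝ) (hnn : ∀ i, 0 ≤ f i) (C : ℝ≥0∞) (hC : C ≠ ⊤) (x : ℝ)
    (hx : 1 ≤ x) (h1 : ∑' i, ENNReal.ofReal (f i) ≤ C * ENNReal.ofReal (2 / x)) :
    Summable f ∧ ∑' i, f i ≤ (C.toReal * 2 + 1) / x := by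
  have hCn : 0 ≤ C.toReal := ENNReal.toReal_nonneg
  have hs : Summable f := by
    have h2 := ENNReal.summable_toReal
      (ne_top_of_le_ne_top (ENNReal.mul_ne_top hC ENNReal.ofReal_ne_top) h1)
    simpa only [ENNReal.toReal_ofReal (hnn _)] using h2
  refine ⟨hs, ?_⟩
  have hx0 : 0 < x := by linarith
  rw [← ENNReal.ofReal_tsum_of_nonneg hnn hs, ← ENNReal.ofReal_toReal hC,
    ← ENNReal.ofReal_mul hCn, ENNReal.ofReal_le_ofReal_iff (by positivity)] at h1
  refine h1.trans ?_
  rw [← mul_div_assoc]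
  gcongr
  linarith

lemma eulerTerm_nonneg (r : ℕ) (N : Fin r → ℕ+) : 0 ≤ eulerTerm r N := by
  unfold eulerTerm
  exact one_div_nonneg.2 (mul_nonneg (Nat.cast_nonneg _) (Finset.prod_nonneg fun _ _ => Nat.cast_nonneg _))

lemma main_aux (r : ℕ) :
    ∃ C : ℝ, 0 < C ∧ ∀ x : ℝ, 1 ≤ x →
      Summable (fun N : {N : Fin (r + 1) → ℕ+ // x < ((N 0 : ℕ) : ℝ)} => eulerTerm (r + 1) N.1) ∧
      ∑' N : {N : Fin (r + 1) → ℕ+ // x < ((N 0 : ℕ) : ℝ)}, eulerTerm (r + 1) N.1 ≤ C / x := by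
  obtain ⟨C, hC, h⟩ := tail_ennreal r
  have hCn : 0 ≤ C.toReal := ENNReal.toReal_nonneg
  refine ⟨C.toReal * 2 + 1, by positivity, fun x hx => ?_⟩
  have h2 := h x hx
  exact conv_aux (fun N : {N : Fin (r + 1) → ℕ+ // x < ((N 0 : ℕ) : ℝ)} => eulerTerm (r + 1) N.1)
    (fun N => eulerTerm_nonneg _ N.1) C hC x hx h2

/-- Fix `r ≥ 1`. There is a constant `C > 0` such that for every real
`x ≥ 1`, the family `1/(φ([n_1,…,n_r])·n_1⋯n_r)` over multi-indices with `n_1 > x`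
is summable with sum at most `C/x`. -/
theorem tail_sum_totient_lcm_bigO (r : ℕ) (hr : 1 ≤ r) :
    ∃ C : ℝ, 0 < C ∧ ∀ x : ℝ, 1 ≤ x →
      Summable (fun N : {N : Fin r → ℕ+ // x < ((N ⟨0, hr⟩ : ℕ) : ℝ)} => eulerTerm r N.1) ∧
      ∑' N : {N : Fin r → ℕ+ // x < ((N ⟨0, hr⟩ : ℕ) : ℝ)}, eulerTerm r N.1 ≤ C / x := by
  match r, hr with
  | s + 1, _ => exact main_aux s
end

section
/- For every ε > 0 there exists a constant C > 0 such that for every positive integer z and every real number x ≥ 1, the finite sum over positive integers n ≤ x of gcd(n,z)·n/φ(n) is at most C·x·z^ε. -/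
open scoped BigOperators

lemma aux_card_le (ε : ℝ) (hε : 0 < ε) :
    ∃ C : ℝ, 0 < C ∧ ∀ n : ℕ, n ≠ 0 → (n.divisors.card : ℝ) ≤ C * (n : ℝ) ^ ε := by
  have hl : 0 < Real.log 2 := Real.log_pos (by norm_num)
  set A : ℝ := 1 + 1 / (ε * Real.log 2) with hA
  have hA1 : 1 ≤ A := by
    have : 0 < 1 / (ε * Real.log 2) := by positivity
    linarith
  set P : ℕ := ⌈(2 : ℝ) ^ (1 / ε)⌉₊ with hP
  refine ⟨A ^ P, by positivity, fun n hn => ?_⟩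
  have h1 : ∀ p ∈ n.primeFactors, ((n.factorization p + 1 : ℕ) : ℝ) ≤
      (if p < P then A else 1) * ((p : ℝ) ^ (n.factorization p)) ^ ε := by
    intro p hp
    have hp2 : (2 : ℝ) ≤ p := by exact_mod_cast (Nat.prime_of_mem_primeFactors hp).two_le
    have hp0 : (0 : ℝ) ≤ p := by linarith
    generalize n.factorization p = k
    have e1 : ((p : ℝ) ^ k) ^ ε = ((p : ℝ) ^ ε) ^ k := by
      rw [← Real.rpow_natCast, ← Real.rpow_natCast, ← Real.rpow_mul hp0, ← Real.rpow_mul hp0,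
        mul_comm]
    rw [e1]
    split_ifs with h
    · have h2 : 1 + ε * Real.log 2 ≤ (p : ℝ) ^ ε := by
        calc 1 + ε * Real.log 2 ≤ Real.exp (Real.log 2 * ε) := by
              have := Real.add_one_le_exp (Real.log 2 * ε)
              linarith
          _ = (2 : ℝ) ^ ε := by rw [Real.rpow_def_of_pos (by norm_num)]
          _ ≤ _ := Real.rpow_le_rpow (by norm_num) hp2 hε.le
      have h3 : 1 + (k : ℝ) * (ε * Real.log 2) ≤ ((p : ℝ) ^ ε) ^ k := by
        refine le_trans (one_add_mul_le_pow (a := ε * Real.log 2) ?_ k) ?_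
        · have : 0 < ε * Real.log 2 := by positivity
          linarith
        · exact pow_le_pow_left₀ (by positivity) h2 k
      have h4 : ((k + 1 : ℕ) : ℝ) ≤ A * (1 + (k : ℝ) * (ε * Real.log 2)) := by
        have ht : 0 < ε * Real.log 2 := by positivity
        rw [hA]
        generalize ε * Real.log 2 = t at ht
        have : (1 + 1 / t) * (1 + (k : ℝ) * t) = 1 + k * t + 1 / t + k := by
          field_simp
          ring
        rw [this]
        push_cast
        have : 0 < 1 / t := by positivity
        have : 0 ≤ (k : ℝ) * t := by positivity
        linarith
      exact h4.trans (mul_le_mul_of_nonneg_left h3 (by linarith))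
    · have h2 : (2 : ℝ) ≤ (p : ℝ) ^ ε := by
        have h5 : (2 : ℝ) ^ (1 / ε) ≤ p :=
          (Nat.le_ceil _).trans (by exact_mod_cast not_lt.mp h)
        calc (2 : ℝ) = ((2 : ℝ) ^ (1 / ε)) ^ ε := by
              rw [← Real.rpow_mul (by norm_num)]
              field_simp
              simp
          _ ≤ _ := Real.rpow_le_rpow (by positivity) h5 hε.le
      rw [one_mul]
      calc ((k + 1 : ℕ) : ℝ) ≤ (2 : ℝ) ^ k := by exact_mod_cast Nat.lt_two_pow_self
        _ ≤ _ := pow_le_pow_left₀ (by norm_num) h2 k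
  rw [Nat.card_divisors hn]
  push_cast
  have h2 := Finset.prod_le_prod (s := n.primeFactors) (fun p _ => Nat.cast_nonneg _) h1
  push_cast at h2
  refine h2.trans ?_
  rw [Finset.prod_mul_distrib, Real.finset_prod_rpow _ _ (fun p _ => by positivity)]
  have h3 : ∏ p ∈ n.primeFactors, (p : ℝ) ^ (n.factorization p) = n := by
    conv_rhs => rw [← Nat.prod_factorization_pow_eq_self hn]
    simp [Finsupp.prod]
  rw [h3]
  refine mul_le_mul_of_nonneg_right ?_ (by positivity)
  rw [← Finset.prod_filter, Finset.prod_const]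
  refine pow_le_pow_right₀ hA1 ?_
  calc _ ≤ (Finset.range P).card := Finset.card_le_card (fun p hp => by
        simp only [Finset.mem_filter] at hp
        simpa using hp.2)
    _ = P := by simp

lemma aux_le_card (n : ℕ) : (n : ℝ) / (n.totient : ℝ) ≤ n.divisors.card := by
  rcases Nat.eq_zero_or_pos n with rfl | hn
  · simp
  have h0 : (0 : ℝ) < n.totient := by exact_mod_cast Nat.totient_pos.2 hn
  rw [div_le_iff₀ h0]
  have : n ≤ n.divisors.card * n.totient := by
    conv_lhs => rw [← Nat.sum_totient n]
    rw [← smul_eq_mul]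
    refine Finset.sum_le_card_nsmul _ _ _ (fun d hd => ?_)
    exact Nat.le_of_dvd (Nat.totient_pos.2 hn) (Nat.totient_dvd_of_dvd (Nat.dvd_of_mem_divisors hd))
  exact_mod_cast this

lemma aux_le_sum (n : ℕ) : (n : ℝ) / (n.totient : ℝ) ≤ ∑ e ∈ n.divisors, 1 / (e.totient : ℝ) := by
  rcases Nat.eq_zero_or_pos n with rfl | hn
  · simp
  have h0 : (0 : ℝ) < n.totient := by exact_mod_cast Nat.totient_pos.2 hn
  rw [div_le_iff₀ h0, Finset.sum_mul]
  have h1 : (n : ℝ) = ∑ e ∈ n.divisors, ((n / e).totient : ℝ) := by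
    have := Nat.sum_totient n
    rw [← Nat.sum_div_divisors] at this
    exact_mod_cast this.symm
  conv_lhs => rw [h1]
  refine Finset.sum_le_sum (fun e he => ?_)
  have hd := Nat.dvd_of_mem_divisors he
  have he0 : (0 : ℝ) < e.totient := by
    exact_mod_cast Nat.totient_pos.2 (Nat.pos_of_mem_divisors he)
  rw [one_div_mul_eq_div, le_div_iff₀ he0]
  have := Nat.totient_super_multiplicative (n / e) e
  rw [Nat.div_mul_cancel hd] at this
  exact_mod_cast this

/-- Sum over `n ≤ N` divisible by `e`. -/
lemma aux_swap (N : ℕ) (e : ℕ) (he : 0 < e) (f : ℕ → ℝ) :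
    ∑ n ∈ (Finset.Icc 1 N).filter (fun n => e ∣ n), f n =
      ∑ m ∈ Finset.Icc 1 (N / e), f (e * m) := by
  symm
  refine Finset.sum_bij (fun m _ => e * m) ?_ ?_ ?_ ?_
  · intro m hm
    simp only [Finset.mem_Icc, Finset.mem_filter] at hm ⊢
    refine ⟨⟨Nat.mul_pos he hm.1, ?_⟩, dvd_mul_right _ _⟩
    have := (Nat.le_div_iff_mul_le he).1 hm.2
    linarith
  · intro a _ b _ h
    exact Nat.eq_of_mul_eq_mul_left he h
  · intro n hn
    simp only [Finset.mem_Icc, Finset.mem_filter] at hn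
    obtain ⟨⟨h1, h2⟩, m, rfl⟩ := hn
    refine ⟨m, ?_, rfl⟩
    simp only [Finset.mem_Icc]
    refine ⟨Nat.pos_of_mul_pos_left h1, (Nat.le_div_iff_mul_le he).2 (by linarith)⟩
  · intros; rfl

lemma aux_mean : ∃ C : ℝ, 0 < C ∧ ∀ N : ℕ,
    ∑ n ∈ Finset.Icc 1 N, (n : ℝ) / (n.totient : ℝ) ≤ C * N := by
  obtain ⟨A, hA, h⟩ := aux_card_le (1 / 2) (by norm_num)
  have hs : Summable (fun n : ℕ => 1 / (n : ℝ) ^ (3 / 2 : ℝ)) :=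
    Real.summable_one_div_nat_rpow.2 (by norm_num)
  set S := ∑' n : ℕ, 1 / (n : ℝ) ^ (3 / 2 : ℝ) with hS
  have hS0 : 0 ≤ S := tsum_nonneg (fun n => by positivity)
  refine ⟨A * (S + 1), by positivity, fun N => ?_⟩
  calc ∑ n ∈ Finset.Icc 1 N, (n : ℝ) / (n.totient : ℝ)
      ≤ ∑ n ∈ Finset.Icc 1 N, ∑ e ∈ (Finset.Icc 1 N).filter (fun e => e ∣ n),
          1 / (e.totient : ℝ) := by
        refine Finset.sum_le_sum (fun n hn => (aux_le_sum n).trans ?_)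
        refine Finset.sum_le_sum_of_subset_of_nonneg ?_ (fun _ _ _ => by positivity)
        intro e he
        have hd := Nat.dvd_of_mem_divisors he
        simp only [Finset.mem_Icc, Finset.mem_filter] at hn ⊢
        exact ⟨⟨Nat.pos_of_mem_divisors he, (Nat.le_of_dvd hn.1 hd).trans hn.2⟩, hd⟩
    _ = ∑ e ∈ Finset.Icc 1 N, ∑ n ∈ (Finset.Icc 1 N).filter (fun n => e ∣ n),
          1 / (e.totient : ℝ) := by
        simp only [Finset.sum_filter]
        exact Finset.sum_comm
    _ ≤ ∑ e ∈ Finset.Icc 1 N, A * N * (1 / (e : ℝ) ^ (3 / 2 : ℝ)) := by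
        refine Finset.sum_le_sum (fun e he => ?_)
        have he1 := (Finset.mem_Icc.1 he).1
        rw [aux_swap N e he1 (fun _ => 1 / (e.totient : ℝ))]
        simp only [Finset.sum_const, Nat.card_Icc, Nat.add_sub_cancel, nsmul_eq_mul]
        have hep : (0 : ℝ) < e := by exact_mod_cast he1
        have h1 : ((N / e : ℕ) : ℝ) ≤ N / e := Nat.cast_div_le
        have h2 : 1 / (e.totient : ℝ) ≤ A * (e : ℝ) ^ (1 / 2 : ℝ) / e := by
          rw [le_div_iff₀ hep, one_div_mul_eq_div]
          exact (aux_le_card e).trans (h e (by omega))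
        refine (mul_le_mul h1 h2 (by positivity) (by positivity)).trans (le_of_eq ?_)
        have h3 : (e : ℝ) * e = (e : ℝ) ^ (3 / 2 : ℝ) * (e : ℝ) ^ (1 / 2 : ℝ) := by
          rw [← Real.rpow_add hep]
          norm_num
          ring
        have h4 : (0 : ℝ) < (e : ℝ) ^ (3 / 2 : ℝ) := by positivity
        rw [div_mul_div_comm, h3]
        have h5 : (0 : ℝ) < (e : ℝ) ^ (1 / 2 : ℝ) := by positivity
        generalize (e : ℝ) ^ (3 / 2 : ℝ) = u at *
        generalize (e : ℝ) ^ (1 / 2 : ℝ) = v at *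
        field_simp
    _ = A * N * ∑ e ∈ Finset.Icc 1 N, (1 / (e : ℝ) ^ (3 / 2 : ℝ)) := by rw [Finset.mul_sum]
    _ ≤ A * N * (S + 1) := by
        refine mul_le_mul_of_nonneg_left ?_ (by positivity)
        have := hs.sum_le_tsum (Finset.Icc 1 N) (fun n _ => by positivity)
        linarith
    _ = _ := by ring

/-- For every `ε > 0` there is `C > 0` such that for every positive
integer `z` and every real `x ≥ 1`,
`∑_{n ≤ x} gcd(n,z)·n/φ(n) ≤ C·x·z^ε`. -/
theorem sum_gcd_mul_div_totient_bigO (ε : ℝ) (hε : 0 < ε) :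
    ∃ C : ℝ, 0 < C ∧ ∀ z : ℕ, 0 < z → ∀ x : ℝ, 1 ≤ x →
      ∑ n ∈ Finset.Icc 1 ⌊x⌋₊, (Nat.gcd n z : ℝ) * n / (Nat.totient n : ℝ) ≤
        C * x * (z : ℝ) ^ ε := by
  obtain ⟨A, hA, hcard⟩ := aux_card_le (ε / 2) (by positivity)
  obtain ⟨B, hB, hmean⟩ := aux_mean
  refine ⟨B * A ^ 2, by positivity, fun z hz x hx => ?_⟩
  have hN : ((⌊x⌋₊ : ℕ) : ℝ) ≤ x := Nat.floor_le (by linarith)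
  generalize ⌊x⌋₊ = N at hN
  calc ∑ n ∈ Finset.Icc 1 N, (Nat.gcd n z : ℝ) * n / (Nat.totient n : ℝ)
      ≤ ∑ n ∈ Finset.Icc 1 N, ∑ d ∈ z.divisors.filter (fun d => d ∣ n),
          (d : ℝ) * n / (Nat.totient n : ℝ) := by
        refine Finset.sum_le_sum (fun n hn => ?_)
        refine Finset.single_le_sum (f := fun d : ℕ => (d : ℝ) * n / (Nat.totient n : ℝ))
          (fun _ _ => by positivity) ?_
        simp [Nat.gcd_dvd_left, Nat.gcd_dvd_right, hz.ne']
    _ = ∑ d ∈ z.divisors, ∑ n ∈ (Finset.Icc 1 N).filter (fun n => d ∣ n),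
          (d : ℝ) * n / (Nat.totient n : ℝ) := by
        simp only [Finset.sum_filter]
        exact Finset.sum_comm
    _ ≤ ∑ d ∈ z.divisors, B * x * (z.divisors.card : ℝ) := by
        refine Finset.sum_le_sum (fun d hd => ?_)
        have hd0 := Nat.pos_of_mem_divisors hd
        have hdp : (0 : ℝ) < d := by exact_mod_cast hd0
        rw [aux_swap N d hd0 (fun n => (d : ℝ) * n / (Nat.totient n : ℝ))]
        calc ∑ m ∈ Finset.Icc 1 (N / d), (d : ℝ) * (d * m : ℕ) / (Nat.totient (d * m) : ℝ)
            ≤ ∑ m ∈ Finset.Icc 1 (N / d),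
                (d * (d / (d.totient : ℝ))) * ((m : ℝ) / (m.totient : ℝ)) := by
              refine Finset.sum_le_sum (fun m hm => ?_)
              have h1 : (0 : ℝ) < d.totient := by exact_mod_cast Nat.totient_pos.2 hd0
              have h2 : (0 : ℝ) < m.totient := by
                exact_mod_cast Nat.totient_pos.2 (Finset.mem_Icc.1 hm).1
              have h3 : (d.totient : ℝ) * m.totient ≤ (d * m).totient := by
                exact_mod_cast Nat.totient_super_multiplicative d m
              have h4 : (d * (d / (d.totient : ℝ))) * ((m : ℝ) / (m.totient : ℝ)) =
                  (d : ℝ) * (d * m : ℕ) / ((d.totient : ℝ) * m.totient) := by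
                push_cast
                field_simp
              rw [h4]
              exact div_le_div_of_nonneg_left (by positivity) (by positivity) h3
          _ = (d * (d / (d.totient : ℝ))) *
                ∑ m ∈ Finset.Icc 1 (N / d), ((m : ℝ) / (m.totient : ℝ)) := by
              rw [Finset.mul_sum]
          _ ≤ (d * (z.divisors.card : ℝ)) * (B * (x / d)) := by
              have h5 : (d.divisors.card : ℝ) ≤ z.divisors.card := by
                exact_mod_cast Finset.card_le_card
                  (Nat.divisors_subset_of_dvd hz.ne' (Nat.dvd_of_mem_divisors hd))
              have h6 : ((N / d : ℕ) : ℝ) ≤ x / d :=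
                Nat.cast_div_le.trans (by gcongr)
              refine mul_le_mul ?_ ((hmean _).trans ?_) (Finset.sum_nonneg fun _ _ => by positivity)
                (by positivity)
              · exact mul_le_mul_of_nonneg_left ((aux_le_card d).trans h5) hdp.le
              · exact mul_le_mul_of_nonneg_left h6 hB.le
          _ = _ := by field_simp
    _ = B * x * (z.divisors.card : ℝ) ^ 2 := by
        rw [Finset.sum_const, nsmul_eq_mul]
        ring
    _ ≤ B * x * (A * (z : ℝ) ^ (ε / 2)) ^ 2 := by
        have := hcard z hz.ne'
        gcongr
    _ = _ := by
        have : ((z : ℝ) ^ (ε / 2)) ^ 2 = (z : ℝ) ^ ε := by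
          rw [← Real.rpow_natCast, ← Real.rpow_mul (by positivity)]
          norm_num
        rw [mul_pow, this]
        ring
end

section
/- Fix an integer r ≥ 1. There exists a constant C > 0 such that for every real number x ≥ 1, the family of terms n_1/(φ([n_1,…,n_r])·n_2⋯n_r), indexed by multi-indices N = (n_1,…,n_r) of positive integers with n_1 ≤ x, is summable and its sum is at most C·x. -/
open scoped BigOperators

/-- The general term `n_1/(φ([n_1,…,n_r])·n_2⋯n_r)` associated to a multi-index
`N = (n_1,…,n_r)` of positive integers (for `r ≥ 1`, the first index being `⟨0, hr⟩`). -/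
noncomputable def eulerTerm₂ (r : ℕ) (hr : 1 ≤ r) (N : Fin r → ℕ+) : ℝ :=
  ((N ⟨0, hr⟩ : ℕ) : ℝ) /
    ((Nat.totient (Finset.univ.lcm fun i => (N i : ℕ)) : ℝ) *
      ∏ i ∈ Finset.univ.erase ⟨0, hr⟩, ((N i : ℕ) : ℝ))

lemma totient_lcm_aux (a b : ℕ) (ha : 0 < a) :
    Nat.totient a * Nat.totient b ≤ Nat.totient (Nat.lcm a b) * Nat.gcd a b := by
  have h1 := Nat.totient_super_multiplicative a b
  have h2 := Nat.totient_gcd_mul_totient_mul (Nat.gcd a b) (Nat.lcm a b)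
  have h3 : Nat.gcd (Nat.gcd a b) (Nat.lcm a b) = Nat.gcd a b :=
    Nat.gcd_eq_left ((Nat.gcd_dvd_left a b).trans (Nat.dvd_lcm_left a b))
  rw [h3, Nat.gcd_mul_lcm, mul_assoc] at h2
  have h4 : 0 < Nat.totient (Nat.gcd a b) :=
    Nat.totient_pos.2 (Nat.gcd_pos_of_pos_left b ha)
  have h5 := Nat.eq_of_mul_eq_mul_left h4 h2
  rw [← h5]; exact h1

/-- `n / φ(n)`. -/
noncomputable def hRatio (n : ℕ) : ℝ := (n : ℝ) / (Nat.totient n : ℝ)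

lemma hRatio_nonneg (n : ℕ) : 0 ≤ hRatio n := by unfold hRatio; positivity

lemma hRatio_mul (a b : ℕ) : hRatio (a * b) ≤ hRatio a * hRatio b := by
  unfold hRatio
  rcases Nat.eq_zero_or_pos a with rfl | ha
  · simp
  rcases Nat.eq_zero_or_pos b with rfl | hb
  · simp
  have h1 : (0 : ℝ) < Nat.totient a := by exact_mod_cast Nat.totient_pos.2 ha
  have h2 : (0 : ℝ) < Nat.totient b := by exact_mod_cast Nat.totient_pos.2 hb
  rw [div_mul_div_comm]
  push_cast
  gcongr
  exact_mod_cast Nat.totient_super_multiplicative a b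

lemma hRatio_le_sum (n : ℕ) (hn : 0 < n) :
    hRatio n ≤ ∑ d ∈ n.divisors, (1 : ℝ) / Nat.totient d := by
  have h1 : (0 : ℝ) < Nat.totient n := by exact_mod_cast Nat.totient_pos.2 hn
  unfold hRatio
  rw [div_le_iff₀ h1, Finset.sum_mul]
  have h2 : (n : ℝ) = ∑ d ∈ n.divisors, (Nat.totient (n / d) : ℝ) := by
    rw [Nat.sum_div_divisors n (fun d => (Nat.totient d : ℝ))]
    exact_mod_cast (Nat.sum_totient n).symm
  rw [h2]
  refine Finset.sum_le_sum fun d hd => ?_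
  have hdn := Nat.dvd_of_mem_divisors hd
  have hd0 := Nat.pos_of_mem_divisors hd
  have h3 : (0 : ℝ) < Nat.totient d := by exact_mod_cast Nat.totient_pos.2 hd0
  rw [one_div, ← div_eq_inv_mul, le_div_iff₀ h3]
  have := Nat.totient_super_multiplicative (n / d) d
  rw [Nat.div_mul_cancel hdn] at this
  exact_mod_cast this

lemma hRatio_le_tau (n : ℕ) : hRatio n ≤ (n.divisors.card : ℝ) := by
  rcases Nat.eq_zero_or_pos n with rfl | hn
  · simp [hRatio]
  refine (hRatio_le_sum n hn).trans ?_
  rw [Finset.card_eq_sum_ones]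
  push_cast
  refine Finset.sum_le_sum fun d hd => ?_
  have hd0 := Nat.pos_of_mem_divisors hd
  have h3 : (1 : ℝ) ≤ Nat.totient d := by exact_mod_cast Nat.totient_pos.2 hd0
  rw [one_div]; exact inv_le_one_of_one_le₀ h3

lemma tau_mul (a b : ℕ) : (a * b).divisors.card ≤ a.divisors.card * b.divisors.card := by
  rw [Nat.divisors_mul]; exact Finset.card_mul_le

lemma tau_pow_sum (s : ℝ) (hs : 1 < s) (k : ℕ) : ∃ B : ℝ, 0 ≤ B ∧ ∀ X : ℕ,
    ∑ n ∈ Finset.Ioc 0 X, (n.divisors.card : ℝ) ^ k * (n : ℝ) ^ (-s) ≤ B := by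
  induction k with
  | zero =>
    have hsum : Summable (fun n : ℕ => (n : ℝ) ^ (-s)) := Real.summable_nat_rpow.2 (by linarith)
    refine ⟨∑' n : ℕ, (n : ℝ) ^ (-s), tsum_nonneg fun n => by positivity, fun X => ?_⟩
    simp only [pow_zero, one_mul]
    exact hsum.sum_le_tsum _ fun n _ => by positivity
  | succ k ih =>
    obtain ⟨B, hB, h⟩ := ih
    refine ⟨B * B, by positivity, fun X => ?_⟩
    set G : ℕ → ℝ := fun n => (n.divisors.card : ℝ) ^ k * (n : ℝ) ^ (-s) with hG
    have hGn : ∀ n, 0 ≤ G n := fun n => by simp only [hG]; positivity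
    set P := Finset.Ioc 0 X ×ˢ Finset.Ioc 0 X
    calc ∑ n ∈ Finset.Ioc 0 X, (n.divisors.card : ℝ) ^ (k+1) * (n : ℝ) ^ (-s)
        = ∑ n ∈ Finset.Ioc 0 X, ∑ p ∈ P with p.1 * p.2 = n, G (p.1 * p.2) := by
          refine Finset.sum_congr rfl fun n hn => ?_
          have hn' := Finset.mem_Ioc.1 hn
          have e : (P.filter fun p => p.1 * p.2 = n) = n.divisorsAntidiagonal := by
            ext ⟨a, b⟩
            simp only [P, Finset.mem_filter, Finset.mem_product, Finset.mem_Ioc,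
              Nat.mem_divisorsAntidiagonal]
            constructor
            · rintro ⟨_, h⟩; exact ⟨h, by omega⟩
            · rintro ⟨h, _⟩
              have ha : 0 < a := Nat.pos_of_ne_zero (by rintro rfl; omega)
              have hb : 0 < b := Nat.pos_of_ne_zero (by rintro rfl; omega)
              refine ⟨⟨⟨ha, ?_⟩, hb, ?_⟩, h⟩ <;> nlinarith
          have e2 : ∑ p ∈ P with p.1 * p.2 = n, G (p.1 * p.2)
              = ∑ p ∈ P with p.1 * p.2 = n, G n :=
            Finset.sum_congr rfl fun p hp => by rw [(Finset.mem_filter.1 hp).2]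
          rw [e2, e, Finset.sum_const, ← Nat.map_div_right_divisors, Finset.card_map,
            nsmul_eq_mul]
          simp only [hG]; ring
      _ ≤ ∑ p ∈ P, G (p.1 * p.2) :=
          Finset.sum_fiberwise_le_sum_of_sum_fiber_nonneg
            fun n _ => Finset.sum_nonneg fun p _ => hGn _
      _ ≤ ∑ p ∈ P, G p.1 * G p.2 := by
          refine Finset.sum_le_sum fun p _ => ?_
          simp only [hG]
          push_cast
          rw [Real.mul_rpow (by positivity) (by positivity)]
          have : ((p.1 * p.2).divisors.card : ℝ) ≤ p.1.divisors.card * p.2.divisors.card := by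
            exact_mod_cast tau_mul _ _
          calc _ ≤ ((p.1.divisors.card : ℝ) * p.2.divisors.card) ^ k *
                ((p.1 : ℝ) ^ (-s) * (p.2 : ℝ) ^ (-s)) := by gcongr
            _ = _ := by rw [mul_pow]; ring
      _ = (∑ n ∈ Finset.Ioc 0 X, G n) * (∑ n ∈ Finset.Ioc 0 X, G n) := by
          rw [Finset.sum_mul_sum, Finset.sum_product]
      _ ≤ B * B := by
          have := h X
          have h0 : 0 ≤ ∑ n ∈ Finset.Ioc 0 X, G n := Finset.sum_nonneg fun n _ => hGn n
          exact mul_le_mul this this h0 hB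

lemma sum_hRatio : ∃ C : ℝ, 0 ≤ C ∧ ∀ X : ℕ, ∑ n ∈ Finset.Ioc 0 X, hRatio n ≤ C * X := by
  obtain ⟨B, hB, h⟩ := tau_pow_sum 2 (by norm_num) 1
  refine ⟨B, hB, fun X => ?_⟩
  calc ∑ n ∈ Finset.Ioc 0 X, hRatio n
      ≤ ∑ n ∈ Finset.Ioc 0 X, ∑ d ∈ Finset.Ioc 0 X,
          if d ∣ n then (1 : ℝ) / Nat.totient d else 0 := by
        refine Finset.sum_le_sum fun n hn => ?_
        have hn' := Finset.mem_Ioc.1 hn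
        refine (hRatio_le_sum n hn'.1).trans (le_of_eq ?_)
        rw [← Finset.sum_filter]
        congr 1
        ext d
        simp only [Nat.mem_divisors, Finset.mem_filter, Finset.mem_Ioc]
        constructor
        · rintro ⟨h, _⟩
          exact ⟨⟨Nat.pos_of_dvd_of_pos h hn'.1, (Nat.le_of_dvd hn'.1 h).trans hn'.2⟩, h⟩
        · rintro ⟨_, h⟩; exact ⟨h, by omega⟩
    _ = ∑ d ∈ Finset.Ioc 0 X, ((X / d : ℕ) : ℝ) * (1 / Nat.totient d) := by
        rw [Finset.sum_comm]
        refine Finset.sum_congr rfl fun d _ => ?_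
        rw [← Finset.sum_filter, Finset.sum_const, Nat.Ioc_filter_dvd_card_eq_div, nsmul_eq_mul]
    _ ≤ ∑ d ∈ Finset.Ioc 0 X, ((d.divisors.card : ℝ) ^ 1 * (d : ℝ) ^ (-2 : ℝ)) * X := by
        refine Finset.sum_le_sum fun d hd => ?_
        have hd0 : (0 : ℝ) < d := by exact_mod_cast (Finset.mem_Ioc.1 hd).1
        have h1 : ((X / d : ℕ) : ℝ) ≤ X / d := Nat.cast_div_le
        have h2 : (1 : ℝ) / Nat.totient d = hRatio d / d := by
          unfold hRatio; field_simp
        have h3 := hRatio_le_tau d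
        have h4 : (d : ℝ) ^ (-2 : ℝ) = 1 / (d * d) := by
          rw [Real.rpow_neg hd0.le]; norm_num; ring
        rw [h2, h4]
        calc _ ≤ (X / d : ℝ) * ((d.divisors.card : ℝ) / d) := by
              have := hRatio_nonneg d
              gcongr
          _ = _ := by field_simp
    _ ≤ B * X := by
        rw [← Finset.sum_mul]
        have := h X
        gcongr

lemma sum_hRatio_gcd : ∃ C : ℝ, 0 ≤ C ∧ ∀ X m : ℕ, 0 < m →
    ∑ n ∈ Finset.Ioc 0 X, hRatio n * (Nat.gcd n m : ℝ) ≤ C * X * (m.divisors.card : ℝ) ^ 2 := by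
  obtain ⟨C, hC, h⟩ := sum_hRatio
  refine ⟨C, hC, fun X m hm => ?_⟩
  calc ∑ n ∈ Finset.Ioc 0 X, hRatio n * (Nat.gcd n m : ℝ)
      ≤ ∑ n ∈ Finset.Ioc 0 X, ∑ d ∈ m.divisors, if d ∣ n then hRatio n * d else 0 := by
        refine Finset.sum_le_sum fun n hn => ?_
        have hmem : Nat.gcd n m ∈ m.divisors :=
          Nat.mem_divisors.2 ⟨Nat.gcd_dvd_right _ _, by omega⟩
        have := Finset.single_le_sum
          (f := fun d : ℕ => if d ∣ n then hRatio n * (d : ℝ) else 0)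
          (fun d _ => by
            have := hRatio_nonneg n
            split_ifs <;> positivity) hmem
        simpa [Nat.gcd_dvd_left] using this
    _ = ∑ d ∈ m.divisors, (∑ n ∈ Finset.Ioc 0 X with d ∣ n, hRatio n) * d := by
        rw [Finset.sum_comm]
        refine Finset.sum_congr rfl fun d _ => ?_
        rw [← Finset.sum_filter, Finset.sum_mul]
    _ ≤ ∑ d ∈ m.divisors, C * X * (m.divisors.card : ℝ) := by
        refine Finset.sum_le_sum fun d hd => ?_
        have hd0 := Nat.pos_of_mem_divisors hd
        have hdR : (0 : ℝ) < d := by exact_mod_cast hd0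
        have e : (Finset.Ioc 0 X).filter (fun n => d ∣ n) =
            (Finset.Ioc 0 (X / d)).image (fun k => d * k) := by
          ext n
          simp only [Finset.mem_filter, Finset.mem_Ioc, Finset.mem_image]
          constructor
          · rintro ⟨⟨h1, h2⟩, k, rfl⟩
            refine ⟨k, ⟨Nat.pos_of_mul_pos_left h1, ?_⟩, rfl⟩
            rw [Nat.le_div_iff_mul_le hd0, mul_comm]; exact h2
          · rintro ⟨k, ⟨h1, h2⟩, rfl⟩
            rw [Nat.le_div_iff_mul_le hd0, mul_comm] at h2
            exact ⟨⟨by positivity, h2⟩, dvd_mul_right _ _⟩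
        rw [e, Finset.sum_image (fun a _ b _ hab => Nat.eq_of_mul_eq_mul_left hd0 hab)]
        have h1 : ∑ k ∈ Finset.Ioc 0 (X / d), hRatio (d * k) ≤ hRatio d * (C * (X / d)) := by
          calc _ ≤ ∑ k ∈ Finset.Ioc 0 (X / d), hRatio d * hRatio k :=
                Finset.sum_le_sum fun k _ => hRatio_mul d k
            _ = hRatio d * ∑ k ∈ Finset.Ioc 0 (X / d), hRatio k := by rw [Finset.mul_sum]
            _ ≤ hRatio d * (C * ((X / d : ℕ) : ℝ)) :=
                mul_le_mul_of_nonneg_left (h _) (hRatio_nonneg d)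
            _ ≤ _ := by
                have h1 : ((X / d : ℕ) : ℝ) ≤ X / d := Nat.cast_div_le
                have := hRatio_nonneg d
                gcongr
        have h2 : hRatio d ≤ (m.divisors.card : ℝ) := by
          refine (hRatio_le_tau d).trans ?_
          exact_mod_cast Finset.card_le_card
            (Nat.divisors_subset_of_dvd hm.ne' (Nat.dvd_of_mem_divisors hd))
        calc _ ≤ hRatio d * (C * (X / d)) * d := by gcongr
          _ = C * X * hRatio d := by field_simp
          _ ≤ _ := by gcongr
    _ = _ := by rw [Finset.sum_const, nsmul_eq_mul]; ring

lemma tau_prod {ι : Type*} (S : Finset ι) (f : ι → ℕ) :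
    (∏ i ∈ S, f i).divisors.card ≤ ∏ i ∈ S, (f i).divisors.card := by
  classical
  induction S using Finset.induction_on with
  | empty => simp
  | insert a S ha ih =>
    rw [Finset.prod_insert ha, Finset.prod_insert ha]
    exact (tau_mul _ _).trans (Nat.mul_le_mul_left _ ih)

lemma weight_bound (s : ℕ) (M : Fin s → ℕ) (hM : ∀ i, 0 < M i) :
    ((Finset.univ.lcm M).divisors.card : ℝ) ^ 2 /
      ((Nat.totient (Finset.univ.lcm M) : ℝ) * ∏ i, (M i : ℝ)) ≤
    ∏ i, (((M i).divisors.card : ℝ) ^ 3 * (M i : ℝ) ^ (-(1 + 1 / ((s : ℝ) + 1)))) := by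
  set m := Finset.univ.lcm M with hm
  have hP : 0 < ∏ i, M i := Finset.prod_pos fun i _ => hM i
  have hdvd : m ∣ ∏ i, M i := Finset.lcm_dvd_prod _ _
  have hm0 : 0 < m := Nat.pos_of_dvd_of_pos hdvd hP
  have htau : (m.divisors.card : ℝ) ≤ ∏ i, ((M i).divisors.card : ℝ) := by
    have := (Finset.card_le_card (Nat.divisors_subset_of_dvd hP.ne' hdvd)).trans
      (tau_prod Finset.univ M)
    exact_mod_cast this
  have hm1 : (1 : ℝ) ≤ m := by exact_mod_cast hm0
  have hmR : (0 : ℝ) < m := by linarith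
  have hPR : (0 : ℝ) < ∏ i, (M i : ℝ) := by exact_mod_cast hP
  have hpow : ∏ i, (M i : ℝ) ≤ (m : ℝ) ^ ((s : ℝ) + 1) := by
    have h1 : ∏ i, (M i : ℝ) ≤ ∏ _i : Fin s, (m : ℝ) :=
      Finset.prod_le_prod (fun i _ => by positivity) fun i _ => by
        exact_mod_cast Nat.le_of_dvd hm0 (Finset.dvd_lcm (Finset.mem_univ i))
    rw [Finset.prod_const, Finset.card_univ, Fintype.card_fin] at h1
    have h2 : (m : ℝ) ^ s ≤ (m : ℝ) ^ (s + 1) := pow_le_pow_right₀ hm1 (by omega)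
    have h3 : (m : ℝ) ^ ((s : ℝ) + 1) = (m : ℝ) ^ (s + 1) := by
      rw [← Real.rpow_natCast]; push_cast; rfl
    rw [h3]; exact h1.trans h2
  have hroot : (∏ i, (M i : ℝ)) ^ (1 / ((s : ℝ) + 1)) ≤ m := by
    calc _ ≤ ((m : ℝ) ^ ((s : ℝ) + 1)) ^ (1 / ((s : ℝ) + 1)) := by gcongr
      _ = m := by
        rw [← Real.rpow_mul hmR.le, mul_one_div_cancel (by positivity), Real.rpow_one]
  have hphi : (1 : ℝ) / Nat.totient m ≤ m.divisors.card / m := by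
    have := hRatio_le_tau m
    have h2 : (1 : ℝ) / Nat.totient m = hRatio m / m := by unfold hRatio; field_simp
    rw [h2]; gcongr
  rw [Finset.prod_mul_distrib, Finset.prod_pow, Real.finsetProd_rpow _ _ (fun i _ => by positivity),
    Real.rpow_neg hPR.le, Real.rpow_add hPR, Real.rpow_one]
  generalize (∏ i, (M i : ℝ)) = Q at *
  generalize (∏ i, ((M i).divisors.card : ℝ)) = T at *
  calc _ = (m.divisors.card : ℝ) ^ 2 * (1 / Nat.totient m) * Q⁻¹ := by
        rw [div_eq_mul_inv, mul_inv, one_div]; ring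
    _ ≤ (m.divisors.card : ℝ) ^ 2 * (m.divisors.card / m) * Q⁻¹ := by gcongr
    _ = (m.divisors.card : ℝ) ^ 3 * (Q * m)⁻¹ := by
        rw [mul_inv]; ring
    _ ≤ _ := by
      have hT : 0 ≤ T := le_trans (by positivity) htau
      gcongr

lemma term_bound (s : ℕ) (hr : 1 ≤ s + 1) (N : Fin (s + 1) → ℕ+) :
    eulerTerm₂ (s + 1) hr N ≤ hRatio (N 0) *
      (Nat.gcd (N 0) (Finset.univ.lcm fun i : Fin s => (N i.succ : ℕ)) : ℝ) *
      (1 / ((Nat.totient (Finset.univ.lcm fun i : Fin s => (N i.succ : ℕ)) : ℝ) *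
        ∏ i : Fin s, ((N i.succ : ℕ) : ℝ))) := by
  have h0 : (⟨0, hr⟩ : Fin (s + 1)) = 0 := rfl
  unfold eulerTerm₂
  rw [h0]
  have e1 : (Finset.univ.lcm fun i : Fin (s + 1) => (N i : ℕ)) =
      Nat.lcm (N 0) (Finset.univ.lcm fun i : Fin s => (N i.succ : ℕ)) := by
    apply Nat.dvd_antisymm
    · refine Finset.lcm_dvd fun i _ => ?_
      refine Fin.cases ?_ (fun j => ?_) i
      · exact Nat.dvd_lcm_left _ _
      · exact (Finset.dvd_lcm (f := fun i : Fin s => (N i.succ : ℕ)) (Finset.mem_univ j)).trans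
          (Nat.dvd_lcm_right _ _)
    · refine Nat.lcm_dvd
        (Finset.dvd_lcm (f := fun i : Fin (s + 1) => (N i : ℕ)) (Finset.mem_univ 0))
        (Finset.lcm_dvd fun j _ =>
        Finset.dvd_lcm (f := fun i : Fin (s + 1) => (N i : ℕ)) (Finset.mem_univ j.succ))
  have e2 : ∏ i ∈ Finset.univ.erase (0 : Fin (s + 1)), ((N i : ℕ) : ℝ) =
      ∏ i : Fin s, ((N i.succ : ℕ) : ℝ) := by
    have hne : ((N 0 : ℕ) : ℝ) ≠ 0 := by exact_mod_cast (N 0).pos.ne'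
    apply mul_left_cancel₀ hne
    rw [Finset.mul_prod_erase Finset.univ (fun i => ((N i : ℕ) : ℝ)) (Finset.mem_univ 0),
      Fin.prod_univ_succ]
  rw [e1, e2]
  have hQ : 0 < ∏ i : Fin s, ((N i.succ : ℕ) : ℝ) :=
    Finset.prod_pos fun i _ => by exact_mod_cast (N i.succ).pos
  have hm : 0 < Finset.univ.lcm fun i : Fin s => (N i.succ : ℕ) :=
    Nat.pos_of_dvd_of_pos (Finset.lcm_dvd_prod _ _)
      (Finset.prod_pos fun i _ => (N i.succ).pos)
  have hn : 0 < (N 0 : ℕ) := (N 0).pos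
  generalize ∏ i : Fin s, ((N i.succ : ℕ) : ℝ) = Q at *
  generalize (Finset.univ.lcm fun i : Fin s => (N i.succ : ℕ)) = m at *
  generalize (N 0 : ℕ) = n at *
  have h1 : (0 : ℝ) < Nat.totient n := by exact_mod_cast Nat.totient_pos.2 hn
  have h2 : (0 : ℝ) < Nat.totient m := by exact_mod_cast Nat.totient_pos.2 hm
  have h3 : (0 : ℝ) < Nat.totient (Nat.lcm n m) := by
    exact_mod_cast Nat.totient_pos.2 (Nat.lcm_pos hn hm)
  have h4 : (Nat.totient n : ℝ) * Nat.totient m ≤ Nat.totient (Nat.lcm n m) * Nat.gcd n m := by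
    exact_mod_cast totient_lcm_aux n m hn
  unfold hRatio
  have e3 : (n : ℝ) / Nat.totient n * (Nat.gcd n m : ℝ) * (1 / (Nat.totient m * Q)) =
      (n * Nat.gcd n m) / (Nat.totient n * Nat.totient m * Q) := by
    field_simp
  rw [e3, div_le_div_iff₀ (by positivity) (by positivity)]
  calc (n : ℝ) * (Nat.totient n * Nat.totient m * Q)
      = (Nat.totient n * Nat.totient m) * (n * Q) := by ring
    _ ≤ (Nat.totient (Nat.lcm n m) * Nat.gcd n m) * (n * Q) := by gcongr
    _ = _ := by ring

/-- Fix `r ≥ 1`. There is a constant `C > 0` such that for every real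
`x ≥ 1`, the family `n_1/(φ([n_1,…,n_r])·n_2⋯n_r)` over multi-indices with `n_1 ≤ x`
is summable with sum at most `C·x`. -/
theorem sum_first_div_totient_lcm_bigO (r : ℕ) (hr : 1 ≤ r) :
    ∃ C : ℝ, 0 < C ∧ ∀ x : ℝ, 1 ≤ x →
      Summable (fun N : {N : Fin r → ℕ+ // ((N ⟨0, hr⟩ : ℕ) : ℝ) ≤ x} => eulerTerm₂ r hr N.1) ∧
      ∑' N : {N : Fin r → ℕ+ // ((N ⟨0, hr⟩ : ℕ) : ℝ) ≤ x}, eulerTerm₂ r hr N.1 ≤ C * x := by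
  classical
  obtain ⟨s, rfl⟩ : ∃ s, r = s + 1 := ⟨r - 1, by omega⟩
  obtain ⟨C, hC, hCb⟩ := sum_hRatio_gcd
  obtain ⟨B, hB, hBb⟩ := tau_pow_sum (1 + 1 / ((s : ℝ) + 1))
    (by have : (0 : ℝ) < 1 / ((s : ℝ) + 1) := by positivity
        linarith) 3
  refine ⟨C * B ^ s + 1, by positivity, fun x hx => ?_⟩
  have hnn : (0 : {N : Fin (s + 1) → ℕ+ // ((N ⟨0, hr⟩ : ℕ) : ℝ) ≤ x} → ℝ) ≤
      fun N => eulerTerm₂ (s + 1) hr N.1 := by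
    intro N
    simp only [Pi.zero_apply, eulerTerm₂]
    positivity
  suffices hfin : ∀ u : Finset {N : Fin (s + 1) → ℕ+ // ((N ⟨0, hr⟩ : ℕ) : ℝ) ≤ x},
      ∑ N ∈ u, eulerTerm₂ (s + 1) hr N.1 ≤ (C * B ^ s + 1) * x from
    ⟨summable_of_sum_le hnn hfin, Real.tsum_le_of_sum_le hnn hfin⟩
  intro u
  set G : ℕ × (Fin s → ℕ) → ℝ := fun p =>
    hRatio p.1 * (Nat.gcd p.1 (Finset.univ.lcm p.2) : ℝ) *
      (1 / ((Nat.totient (Finset.univ.lcm p.2) : ℝ) * ∏ i : Fin s, (p.2 i : ℝ))) with hG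
  have hGn : ∀ p, 0 ≤ G p := fun p => by
    have := hRatio_nonneg p.1
    simp only [hG]
    positivity
  set e : {N : Fin (s + 1) → ℕ+ // ((N ⟨0, hr⟩ : ℕ) : ℝ) ≤ x} → ℕ × (Fin s → ℕ) :=
    fun N => ((N.1 0 : ℕ), fun i => (N.1 i.succ : ℕ)) with he
  have hinj : Function.Injective e := by
    intro N N' h
    simp only [he, Prod.mk.injEq] at h
    apply Subtype.ext
    funext i
    refine Fin.cases ?_ (fun j => ?_) i
    · exact PNat.coe_injective h.1
    · exact PNat.coe_injective (congrFun h.2 j)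
  set K : ℕ := u.sup fun N => Finset.univ.sup fun i => (N.1 i : ℕ) with hK
  set A := Finset.Ioc 0 ⌊x⌋₊ with hA
  set D : Finset (Fin s → ℕ) := Fintype.piFinset fun _ => Finset.Ioc 0 K with hD
  have hsub : u.image e ⊆ A ×ˢ D := by
    intro p hp
    obtain ⟨N, hN, rfl⟩ := Finset.mem_image.1 hp
    simp only [he, hA, hD, Finset.mem_product, Finset.mem_Ioc, Fintype.mem_piFinset]
    refine ⟨⟨(N.1 0).pos, Nat.le_floor N.2⟩, fun i => ⟨(N.1 i.succ).pos, ?_⟩⟩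
    exact (Finset.le_sup (f := fun i => (N.1 i : ℕ)) (Finset.mem_univ i.succ)).trans
      (Finset.le_sup (f := fun N : {N : Fin (s + 1) → ℕ+ // ((N ⟨0, hr⟩ : ℕ) : ℝ) ≤ x} =>
        Finset.univ.sup fun i => (N.1 i : ℕ)) hN)
  have hfl : (⌊x⌋₊ : ℝ) ≤ x := Nat.floor_le (by linarith)
  calc ∑ N ∈ u, eulerTerm₂ (s + 1) hr N.1
      ≤ ∑ N ∈ u, G (e N) := Finset.sum_le_sum fun N _ => term_bound s hr N.1
    _ = ∑ p ∈ u.image e, G p := by rw [Finset.sum_image hinj.injOn]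
    _ ≤ ∑ p ∈ A ×ˢ D, G p :=
        Finset.sum_le_sum_of_subset_of_nonneg hsub fun p _ _ => hGn p
    _ = ∑ M ∈ D, ∑ n ∈ A, G (n, M) := by rw [Finset.sum_product_right]
    _ ≤ ∑ M ∈ D, (C * x) * ∏ i, (((M i).divisors.card : ℝ) ^ 3 *
          (M i : ℝ) ^ (-(1 + 1 / ((s : ℝ) + 1)))) := by
        refine Finset.sum_le_sum fun M hM => ?_
        have hMpos : ∀ i, 0 < M i := fun i =>
          (Finset.mem_Ioc.1 (Fintype.mem_piFinset.1 hM i)).1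
        have hm : 0 < Finset.univ.lcm M :=
          Nat.pos_of_dvd_of_pos (Finset.lcm_dvd_prod _ _)
            (Finset.prod_pos fun i _ => hMpos i)
        simp only [hG]
        rw [← Finset.sum_mul]
        have hw := weight_bound s M hMpos
        have hc := hCb ⌊x⌋₊ _ hm
        calc _ ≤ (C * ⌊x⌋₊ * ((Finset.univ.lcm M).divisors.card : ℝ) ^ 2) *
              (1 / ((Nat.totient (Finset.univ.lcm M) : ℝ) * ∏ i : Fin s, (M i : ℝ))) :=
              mul_le_mul_of_nonneg_right hc (by positivity)
          _ = (C * ⌊x⌋₊) * (((Finset.univ.lcm M).divisors.card : ℝ) ^ 2 /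
              ((Nat.totient (Finset.univ.lcm M) : ℝ) * ∏ i : Fin s, (M i : ℝ))) := by
              rw [mul_assoc, mul_one_div]
          _ ≤ (C * x) * (((Finset.univ.lcm M).divisors.card : ℝ) ^ 2 /
              ((Nat.totient (Finset.univ.lcm M) : ℝ) * ∏ i : Fin s, (M i : ℝ))) :=
              mul_le_mul_of_nonneg_right (mul_le_mul_of_nonneg_left hfl hC) (by positivity)
          _ ≤ _ := mul_le_mul_of_nonneg_left hw (by positivity)
    _ = (C * x) * (∑ n ∈ Finset.Ioc 0 K, ((n.divisors.card : ℝ) ^ 3 *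
          (n : ℝ) ^ (-(1 + 1 / ((s : ℝ) + 1))))) ^ s := by
        rw [← Finset.mul_sum, hD, Finset.sum_prod_piFinset (Finset.Ioc 0 K)
          (fun (_ : Fin s) (n : ℕ) => ((n.divisors.card : ℝ) ^ 3 *
          (n : ℝ) ^ (-(1 + 1 / ((s : ℝ) + 1)))))]
        simp
    _ ≤ (C * x) * B ^ s := by
        refine mul_le_mul_of_nonneg_left ?_ (by positivity)
        exact pow_le_pow_left₀ (Finset.sum_nonneg fun n _ => by positivity) (hBb K) s
    _ ≤ (C * B ^ s + 1) * x := by nlinarith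
end

section
/- There exists a positive integer B (depending only on K and α_1,…,α_r) such that for all positive integers n, t_1,…,t_r with t_i dividing n for every i, the degree [K(ζ_n, α_1^{1/t_1},…,α_r^{1/t_r}) : K(ζ_n)] divides the product t_1·t_2⋯t_r, and the quotient (t_1·t_2⋯t_r)/[K(ζ_n, α_1^{1/t_1},…,α_r^{1/t_r}) : K(ζ_n)] divides B. -/
open scoped BigOperators

/-- A fixed primitive `n`-th root of unity in `ℂ` (for `n ≥ 1`). -/
noncomputable def primRoot (n : ℕ) : ℂ := Complex.exp (2 * Real.pi * Complex.I / n)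

/-- The subfield `K(ζ_n, α_1^{1/t_1}, …, α_r^{1/t_r})` of `ℂ`, obtained by adjoining to `K`
a primitive `n`-th root of unity and, for each `i`, all complex roots of `X^{t_i} - α_i`. -/
noncomputable def kummerField (K : IntermediateField ℚ ℂ) {r : ℕ} (α : Fin r → ℂ)
    (n : ℕ) (t : Fin r → ℕ) : IntermediateField ℚ ℂ :=
  K ⊔ IntermediateField.adjoin ℚ ({primRoot n} ∪ ⋃ i, {z : ℂ | z ^ (t i) = α i})

/-- The cyclotomic extension `K(ζ_n)` of `K` inside `ℂ`. -/
noncomputable def cycloField (K : IntermediateField ℚ ℂ) (n : ℕ) : IntermediateField ℚ ℂ :=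
  K ⊔ IntermediateField.adjoin ℚ {primRoot n}

lemma cyclo_le_kummer (K : IntermediateField ℚ ℂ) {r : ℕ} (α : Fin r → ℂ)
    (n : ℕ) (t : Fin r → ℕ) : cycloField K n ≤ kummerField K α n t :=
  sup_le_sup_left (IntermediateField.adjoin.mono _ _ _ Set.subset_union_left) _

lemma base_le_kummer (K : IntermediateField ℚ ℂ) {r : ℕ} (α : Fin r → ℂ)
    (n : ℕ) (t : Fin r → ℕ) : K ≤ kummerField K α n t :=
  le_sup_left

open Height NumberField

lemma sat_bound {r : ℕ} (K : Type*) [Field K] [NumberField K] (a : Fin r → K)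
    (ha0 : ∀ i, a i ≠ 0)
    (hind : ∀ e : Fin r → ℤ, ∏ i, a i ^ e i = 1 → e = 0) :
    ∃ M : ℕ, 0 < M ∧ ∀ n : ℕ, 0 < n → ∀ (h : Fin r → ℤ) (δ : K),
      δ ^ n = ∏ i, a i ^ h i → ∀ i, (n : ℤ) ∣ M * h i := by
  classical
  set C : ℝ := ∑ i, logHeight₁ (a i) with hC
  have hfin : {x : K | logHeight₁ x ≤ C}.Finite := NumberField.finite_setOfPred_logHeight₁_le K C
  have hch : ∀ x : K, ∃ m : ℕ, 0 < m ∧ ((∃ m : ℕ, 0 < m ∧ ∃ c : Fin r → ℤ, x ^ m = ∏ i, a i ^ c i) →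
      ∃ c : Fin r → ℤ, x ^ m = ∏ i, a i ^ c i) := by
    intro x
    by_cases hx : ∃ m : ℕ, 0 < m ∧ ∃ c : Fin r → ℤ, x ^ m = ∏ i, a i ^ c i
    · obtain ⟨m, hm, hc⟩ := hx
      exact ⟨m, hm, fun _ => hc⟩
    · exact ⟨1, one_pos, fun h => absurd h hx⟩
  choose m hm hmc using hch
  refine ⟨∏ x ∈ hfin.toFinset, m x, Finset.prod_pos fun x _ => hm x, ?_⟩
  intro n hn h δ hδ i
  have hnZ : (0 : ℤ) < n := by exact_mod_cast hn
  -- reduce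
  set x : K := δ * (∏ i, a i ^ (h i / n))⁻¹ with hx
  have hP : ∏ i, a i ^ (h i / n) ≠ 0 := Finset.prod_ne_zero_iff.mpr fun i _ => zpow_ne_zero _ (ha0 i)
  have hxn : x ^ n = ∏ i, a i ^ (h i % n) := by
    rw [hx, mul_pow, hδ, inv_pow, ← div_eq_mul_inv, div_eq_iff (pow_ne_zero _ hP), ← Finset.prod_pow,
      ← Finset.prod_mul_distrib]
    refine Finset.prod_congr rfl fun i _ => ?_
    rw [← zpow_natCast, ← zpow_mul, ← zpow_add₀ (ha0 i), mul_comm, Int.emod_add_mul_ediv]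
  have hxC : logHeight₁ x ≤ C := by
    have h1 : (n : ℝ) * logHeight₁ x ≤ n * C := by
      rw [← logHeight₁_pow, hxn, hC, Finset.mul_sum]
      refine (logHeight₁_prod_le _ _).trans (Finset.sum_le_sum fun i _ => ?_)
      rw [logHeight₁_zpow]
      refine mul_le_mul_of_nonneg_right ?_ (zero_le_logHeight₁ _)
      have := Int.emod_nonneg (h i) hnZ.ne'
      have := Int.emod_lt_of_pos (h i) hnZ
      exact_mod_cast (by omega : (h i % n).natAbs ≤ n)
    exact le_of_mul_le_mul_left h1 (by exact_mod_cast hn)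
  obtain ⟨c, hc⟩ := hmc x ⟨n, hn, _, hxn⟩
  have hkey : ∀ i, (m x : ℤ) * (h i % n) = n * c i := by
    have : (fun i => (m x : ℤ) * (h i % n) - n * c i) = 0 := by
      apply hind
      have e1 : ∏ i, a i ^ ((m x : ℤ) * (h i % n)) = x ^ (n * m x) := by
        rw [pow_mul, hxn, ← Finset.prod_pow]
        refine Finset.prod_congr rfl fun i _ => ?_
        rw [← zpow_natCast, ← zpow_mul, mul_comm]
      have e2 : ∏ i, a i ^ ((n : ℤ) * c i) = x ^ (n * m x) := by
        rw [mul_comm, pow_mul, hc, ← Finset.prod_pow]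
        refine Finset.prod_congr rfl fun i _ => ?_
        rw [← zpow_natCast, ← zpow_mul, mul_comm]
      simp_rw [zpow_sub₀ (ha0 _), Finset.prod_div_distrib]
      rw [e1, e2, div_self]
      rw [← e1]
      exact Finset.prod_ne_zero_iff.mpr fun i _ => zpow_ne_zero _ (ha0 i)
    intro i
    have := congrFun this i
    simp only [Pi.zero_apply] at this
    linarith
  have hd : (m x : ℤ) ∣ ((∏ x ∈ hfin.toFinset, m x : ℕ) : ℤ) := by
    exact_mod_cast Finset.dvd_prod_of_mem m (by simpa using hxC)
  obtain ⟨k, hk⟩ := hd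
  rw [hk]
  refine ⟨k * (c i + m x * (h i / n)), ?_⟩
  have := hkey i
  conv_lhs => rw [← Int.emod_add_mul_ediv (h i) n]
  linear_combination k * this

lemma tors_bound (K : Type*) [Field K] [NumberField K] :
    ∃ w : ℕ, 0 < w ∧ ∀ (x : K) (g : ℕ), 0 < g → x ^ g = 1 → x ^ w = 1 := by
  classical
  have hfin : {x : K | logHeight₁ x ≤ 0}.Finite := NumberField.finite_setOfPred_logHeight₁_le K 0
  refine ⟨Nat.factorial hfin.toFinset.card, Nat.factorial_pos _, ?_⟩
  intro x g hg hx
  have hpos : 0 < orderOf x := orderOf_pos_iff.mpr (isOfFinOrder_iff_pow_eq_one.mpr ⟨g, hg, hx⟩)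
  apply orderOf_dvd_iff_pow_eq_one.mp
  apply Nat.dvd_factorial hpos
  rw [← Finset.card_range (orderOf x), ← Finset.card_image_of_injOn (f := fun k => x ^ k) (s := Finset.range (orderOf x))
    (by intro a ha b hb h; exact pow_injOn_Iio_orderOf (by simpa using ha) (by simpa using hb) h)]
  apply Finset.card_le_card
  intro y hy
  simp only [Finset.mem_image, Finset.mem_range] at hy
  obtain ⟨k, -, rfl⟩ := hy
  have h0 : (g : ℝ) * logHeight₁ (x ^ k) = 0 := by
    rw [← logHeight₁_pow, ← pow_mul, mul_comm, pow_mul, hx, one_pow, logHeight₁_one]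
  have : logHeight₁ (x ^ k) = 0 := by
    rcases mul_eq_zero.mp h0 with h | h
    · exact absurd h (by exact_mod_cast hg.ne')
    · exact h
  simp [this]

lemma schinzel (K F : Type*) [Field K] [Field F] [Algebra K F] [CharZero K] (n : ℕ) [NeZero n]
    [IsCyclotomicExtension {n} K F] (w : ℕ)
    (hw : ∀ (x : K) (g : ℕ), 0 < g → x ^ g = 1 → x ^ w = 1)
    (a : K) (ha : a ≠ 0) (γ : F) (hγ : γ ^ n = algebraMap K F a) :
    ∃ δ : K, δ ^ n = a ^ w := by
  have hn0 : n ≠ 0 := NeZero.ne n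
  have := IsCyclotomicExtension.isGalois {n} K F
  have : FiniteDimensional K F := IsCyclotomicExtension.finiteDimensional {n} K F
  have := IsCyclotomicExtension.isMulCommutative {n} K F
  have hζ := IsCyclotomicExtension.zeta_spec n K F
  set ζ := IsCyclotomicExtension.zeta n K F
  have hγ0 : γ ≠ 0 := by
    rintro rfl
    rw [zero_pow hn0] at hγ
    exact ha ((map_eq_zero _).mp hγ.symm)
  let J : AddSubgroup ℤ :=
    { carrier := {k | ∃ δ : K, δ ≠ 0 ∧ δ ^ n = a ^ k}
      zero_mem' := ⟨1, one_ne_zero, by simp⟩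
      add_mem' := by
        rintro k l ⟨d, hd, h1⟩ ⟨e, he, h2⟩
        exact ⟨d * e, mul_ne_zero hd he, by rw [mul_pow, h1, h2, zpow_add₀ ha]⟩
      neg_mem' := by
        rintro k ⟨d, hd, h1⟩
        exact ⟨d⁻¹, inv_ne_zero hd, by rw [inv_pow, h1, zpow_neg]⟩ }
  obtain ⟨g, hg⟩ := Int.subgroup_cyclic J
  rw [← AddSubgroup.zmultiples_eq_closure] at hg
  have hmem : ∀ k, k ∈ J ↔ g ∣ k := fun k => by rw [hg, Int.mem_zmultiples_iff]
  have hnJ : g ∣ n := (hmem _).mp ⟨a, ha, by simp⟩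
  have hσ : ∀ σ : F ≃ₐ[K] F, ∃ k : ℕ, σ ζ = ζ ^ k ∧ g ∣ (k : ℤ) - 1 := by
    intro σ
    obtain ⟨k, -, hk⟩ := hζ.eq_pow_of_pow_eq_one (ξ := σ ζ) (by rw [← map_pow, hζ.pow_eq_one, map_one])
    refine ⟨k, hk.symm, ?_⟩
    have hfix : ∀ τ : F ≃ₐ[K] F, τ (σ γ / γ ^ k) = σ γ / γ ^ k := by
      intro τ
      obtain ⟨b, -, hb⟩ := hζ.eq_pow_of_pow_eq_one (ξ := τ γ / γ)
        (by rw [div_pow, ← map_pow, hγ, AlgEquiv.commutes, div_self]; simpa using ha)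
      have hτ : τ γ = ζ ^ b * γ := by rw [hb, div_mul_cancel₀ _ hγ0]
      have hcomm : τ (σ γ) = σ (τ γ) := by
        have := mul_comm' τ σ
        exact congrArg (fun f : F ≃ₐ[K] F => f γ) this
      rw [map_div₀, hcomm, map_pow, hτ, map_mul, map_pow, ← hk, mul_pow, ← pow_mul, ← pow_mul, mul_comm k b,
        mul_div_mul_left]
      exact pow_ne_zero _ (hζ.ne_zero hn0)
    obtain ⟨d, hd⟩ := (IsGalois.mem_range_algebraMap_iff_fixed _).mpr hfix
    have hd0 : d ≠ 0 := by
      rintro rfl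
      rw [map_zero] at hd
      exact (div_ne_zero ((map_ne_zero σ).mpr hγ0) (pow_ne_zero _ hγ0)) hd.symm
    rw [← hmem, ← J.neg_mem_iff]
    refine ⟨d, hd0, (algebraMap K F).injective ?_⟩
    rw [map_pow, hd, div_pow, ← map_pow, hγ, AlgEquiv.commutes, ← pow_mul, mul_comm, pow_mul, hγ, neg_sub,
      zpow_sub₀ ha, map_div₀]
    simp
  obtain ⟨q, hq⟩ := hnJ
  have hx : ∃ x : K, algebraMap K F x = ζ ^ q := by
    apply (IsGalois.mem_range_algebraMap_iff_fixed _).mpr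
    intro σ
    obtain ⟨k, hk, l, hl⟩ := hσ σ
    rw [map_zpow₀, hk, ← zpow_natCast, ← zpow_mul]
    have : (k : ℤ) * q = q + n * l := by rw [hq]; linear_combination q * hl
    rw [this, zpow_add₀ (hζ.ne_zero hn0), zpow_mul, zpow_natCast, hζ.pow_eq_one, one_zpow, mul_one]
  obtain ⟨x, hx⟩ := hx
  have hx1 : x ^ w = 1 := by
    apply hw x n (Nat.pos_of_ne_zero hn0)
    apply (algebraMap K F).injective
    rw [map_pow, hx, ← zpow_natCast, ← zpow_mul, mul_comm, zpow_mul, zpow_natCast, hζ.pow_eq_one]; simp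
  have hgw : g ∣ w := by
    have : ζ ^ (q * w) = 1 := by
      rw [zpow_mul, ← hx, zpow_natCast, ← map_pow, hx1, map_one]
    rw [hζ.zpow_eq_one_iff_dvd, hq, mul_comm] at this
    refine Int.dvd_of_mul_dvd_mul_left ?_ this
    rintro rfl
    simp at hq; exact hn0 hq
  obtain ⟨d, -, hd⟩ := (hmem _).mpr hgw
  exact ⟨d, by simpa using hd⟩

lemma card_char_le (G L : Type*) [Group G] [Finite G] [Field L] :
    Finite (G →* L) ∧ Nat.card (G →* L) ≤ Nat.card G := by
  cases nonempty_fintype G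
  have h := linearIndependent_monoidHom G L
  have : Finite (G →* L) := h.finite
  cases nonempty_fintype (G →* L)
  refine ⟨inferInstance, ?_⟩
  have := h.fintype_card_le_finrank
  rwa [Module.finrank_fintype_fun_eq_card, ← Nat.card_eq_fintype_card, ← Nat.card_eq_fintype_card] at this

lemma index_pi_zmultiples {r : ℕ} (m : Fin r → ℕ) (P : AddSubgroup (Fin r → ℤ))
    (hP : ∀ e, e ∈ P ↔ ∀ i, (m i : ℤ) ∣ e i) : P.index = ∏ i, m i := by
  have : P = AddSubgroup.pi Set.univ (fun i => AddSubgroup.zmultiples (m i : ℤ)) := by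
    ext e
    simp [hP, AddSubgroup.mem_pi, Int.mem_zmultiples_iff]
  rw [this, AddSubgroup.index_pi]
  simp [Int.index_zmultiples]

lemma kummer_card (F L : Type*) [Field F] [Field L] [Algebra F L] [FiniteDimensional F L]
    [IsGalois F L] {E : Type*} [CommGroup E] (f : E →* Lˣ) (n : ℕ) [NeZero n] (ζ : F)
    (hζ : IsPrimitiveRoot ζ n) (hf : ∀ e, ∃ a : F, algebraMap F L a = (f e : L) ^ n)
    (hext : ∀ σ τ : L ≃ₐ[F] L, (∀ e, σ (f e : L) = τ (f e : L)) → σ = τ) (P : Subgroup E)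
    (hP : ∀ e, e ∈ P ↔ ∃ a : F, algebraMap F L a = (f e : L)) :
    Module.finrank F L = P.index := by
  have hζ' : IsPrimitiveRoot (algebraMap F L ζ) n := hζ.map_of_injective (algebraMap F L).injective
  have hf0 : ∀ e, (f e : L) ≠ 0 := fun e => (f e).ne_zero
  -- the pairing takes values in `F`
  have hval : ∀ (σ : L ≃ₐ[F] L) e, ∃ c : F, algebraMap F L c = σ (f e) / f e := by
    intro σ e
    obtain ⟨a, ha⟩ := hf e
    obtain ⟨k, -, hk⟩ := hζ'.eq_pow_of_pow_eq_one (ξ := σ (f e) / f e) (by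
      rw [div_pow, ← map_pow, ← ha, AlgEquiv.commutes, div_self]
      rw [ha]; exact pow_ne_zero _ (hf0 e))
    exact ⟨ζ ^ k, by rw [map_pow, hk]⟩
  let ψ : E →* ((L ≃ₐ[F] L) →* L) :=
    { toFun := fun e =>
        { toFun := fun σ => σ (f e) / f e
          map_one' := by simp [hf0]
          map_mul' := by
            intro σ τ
            obtain ⟨c, hc⟩ := hval τ e
            have h1 : τ (f e) = algebraMap F L c * f e := by rw [hc, div_mul_cancel₀ _ (hf0 e)]
            rw [AlgEquiv.mul_apply, h1, map_mul, AlgEquiv.commutes, mul_div_assoc, 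
              mul_div_cancel_right₀ _ (hf0 e), mul_comm] }
      map_one' := by ext σ; simp
      map_mul' := by
        intro e e'
        ext σ
        simp [mul_div_mul_comm] }
  have hψ : ∀ e σ, ψ e σ = σ (f e) / f e := fun e σ => rfl
  have hker : ∀ e, e ∈ P ↔ ψ e = 1 := by
    intro e
    rw [hP]
    refine Iff.trans (IsGalois.mem_range_algebraMap_iff_fixed (F := F) (f e : L)) ?_
    constructor
    · intro h
      ext σ
      rw [hψ, h σ, div_self (hf0 e)]; rfl
    · intro h σ
      have := DFunLike.congr_fun h σ
      rw [hψ] at this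
      exact (div_eq_one_iff_eq (hf0 e)).mp this
  let ψQ : E ⧸ P →* ((L ≃ₐ[F] L) →* L) := QuotientGroup.lift P ψ (fun e he => (hker e).mp he)
  have hinj : Function.Injective ψQ := by
    rw [injective_iff_map_eq_one]
    intro q hq
    induction q using QuotientGroup.induction_on with
    | H e => exact (QuotientGroup.eq_one_iff e).mpr ((hker e).mpr hq)
  obtain ⟨hfin1, hle1⟩ := card_char_le (L ≃ₐ[F] L) L
  have hfinQ : Finite (E ⧸ P) := Finite.of_injective _ hinj
  obtain ⟨hfin2, hle2⟩ := card_char_le (E ⧸ P) L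
  let θ : (L ≃ₐ[F] L) → (E ⧸ P →* L) := fun σ =>
    { toFun := fun q => ψQ q σ
      map_one' := by simp
      map_mul' := by simp }
  have hθ : Function.Injective θ := by
    intro σ τ h
    have h1 : ∀ e, σ (f e) = τ (f e) := by
      intro e
      have h2 : ψ e σ = ψ e τ := DFunLike.congr_fun h (e : E ⧸ P)
      rw [hψ, hψ] at h2
      exact (div_left_inj' (hf0 e)).mp h2
    exact hext σ τ h1
  have c1 := Nat.card_le_card_of_injective _ hinj
  have c2 := Nat.card_le_card_of_injective _ hθ
  rw [← IsGalois.card_aut_eq_finrank]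
  exact le_antisymm (c2.trans hle2) (c1.trans hle1)

lemma primRoot_spec (n : ℕ) (hn : n ≠ 0) : IsPrimitiveRoot (primRoot n) n :=
  Complex.isPrimitiveRoot_exp n hn

lemma primRoot_mem_cyclo (K : IntermediateField ℚ ℂ) (n : ℕ) : primRoot n ∈ cycloField K n :=
  (le_sup_right : IntermediateField.adjoin ℚ {primRoot n} ≤ cycloField K n)
    (IntermediateField.subset_adjoin ℚ _ rfl)

lemma cyclo_le_adjoin (K : IntermediateField ℚ ℂ) (n : ℕ) :
    cycloField K n ≤ (IntermediateField.adjoin K {primRoot n}).restrictScalars ℚ := by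
  refine sup_le ?_ ?_
  · intro x hx
    exact (IntermediateField.adjoin K {primRoot n}).algebraMap_mem ⟨x, hx⟩
  · rw [IntermediateField.adjoin_le_iff]
    rintro x rfl
    exact IntermediateField.subset_adjoin K _ rfl

lemma cyclo_isCyclotomic (K : IntermediateField ℚ ℂ) (n : ℕ) [NeZero n] :
    IsCyclotomicExtension {n} K (IntermediateField.adjoin K {primRoot n}) := by
  have h := primRoot_spec n (NeZero.ne n)
  change IsCyclotomicExtension {n} K (IntermediateField.adjoin K {primRoot n}).toSubalgebra
  rw [IntermediateField.adjoin_simple_toSubalgebra_of_isAlgebraic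
    (h.isIntegral (NeZero.pos n)).tower_top.isAlgebraic]
  exact h.adjoin_isCyclotomicExtension K

/-- If `γ ∈ K(ζ_n)` has `γ ^ n ∈ K`, some bounded power of `γ ^ n` is an `n`-th power in `K`. -/
lemma cyclo_power (K : IntermediateField ℚ ℂ) (n : ℕ) (hn : 0 < n) (w : ℕ)
    (hw : ∀ (x : K) (g : ℕ), 0 < g → x ^ g = 1 → x ^ w = 1)
    (a : K) (ha : a ≠ 0) (γ : ℂ) (hγ : γ ∈ cycloField K n) (hγn : γ ^ n = a) :
    ∃ δ : K, δ ^ n = a ^ w := by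
  have : NeZero n := ⟨hn.ne'⟩
  have := cyclo_isCyclotomic K n
  refine schinzel K (IntermediateField.adjoin K {primRoot n}) n w hw a ha
    ⟨γ, cyclo_le_adjoin K n hγ⟩ ?_
  apply Subtype.ext
  exact hγn

lemma kummer_ext_eq_adjoin (K : IntermediateField ℚ ℂ) {r : ℕ} (α : Fin r → ℂ)
    (hα0 : ∀ i, α i ≠ 0) (n : ℕ) (t : Fin r → ℕ) (hn : 0 < n)
    (htn : ∀ i, t i ∣ n) (β : Fin r → ℂ) (hβ : ∀ i, β i ^ t i = α i) (S : Set ℂ)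
    (hS1 : ∀ i, β i ∈ S) (hS2 : S ⊆ ⋃ i, {z : ℂ | z ^ (t i) = α i}) :
    IntermediateField.extendScalars (cyclo_le_kummer K α n t) =
      IntermediateField.adjoin (cycloField K n) S := by
  have hK : ∀ i, {z : ℂ | z ^ (t i) = α i} ⊆ kummerField K α n t := by
    intro i z hz
    refine (le_sup_right : _ ≤ kummerField K α n t) (IntermediateField.subset_adjoin ℚ _ ?_)
    exact Or.inr (Set.mem_iUnion.mpr ⟨i, hz⟩)
  have ht0 : ∀ i, t i ≠ 0 := fun i h => hn.ne' (Nat.eq_zero_of_zero_dvd (h ▸ htn i))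
  apply le_antisymm
  · have key : kummerField K α n t ≤
        (IntermediateField.adjoin (cycloField K n) S).restrictScalars ℚ := by
      have hcy : ∀ x ∈ cycloField K n, x ∈ IntermediateField.adjoin (cycloField K n) S :=
        fun x hx => (IntermediateField.adjoin (cycloField K n) S).algebraMap_mem ⟨x, hx⟩
      refine sup_le ?_ ?_
      · intro x hx
        exact hcy x ((le_sup_left : K ≤ cycloField K n) hx)
      · rw [IntermediateField.adjoin_le_iff]
        rintro z (rfl | hz)
        · exact hcy _ (primRoot_mem_cyclo K n)
        · obtain ⟨i, hi⟩ := Set.mem_iUnion.mp hz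
          have hi : z ^ t i = α i := hi
          have hb0 : β i ≠ 0 := by
            intro h
            apply hα0 i
            rw [← hβ i, h, zero_pow (ht0 i)]
          have h1 : (z / β i) ^ n = 1 := by
            obtain ⟨c, hc⟩ := htn i
            rw [hc, pow_mul, div_pow, hi, hβ, div_self (hα0 i), one_pow]
          have : NeZero n := ⟨hn.ne'⟩
          obtain ⟨k, -, hk⟩ := (primRoot_spec n hn.ne').eq_pow_of_pow_eq_one h1
          have hz : z = primRoot n ^ k * β i := by rw [hk, div_mul_cancel₀ _ hb0]
          change z ∈ IntermediateField.adjoin (cycloField K n) S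
          rw [hz]
          exact mul_mem (pow_mem (hcy _ (primRoot_mem_cyclo K n)) k)
            (IntermediateField.subset_adjoin _ _ (hS1 i))
    intro x hx
    exact key hx
  · rw [IntermediateField.adjoin_le_iff]
    intro z hz
    obtain ⟨i, hi⟩ := Set.mem_iUnion.mp (hS2 hz)
    exact hK i hi

lemma kummer_ext_galois (K : IntermediateField ℚ ℂ) {r : ℕ} (α : Fin r → ℂ)
    (hmem : ∀ i, α i ∈ K)
    (hα0 : ∀ i, α i ≠ 0) (n : ℕ) (t : Fin r → ℕ) (hn : 0 < n)
    (htn : ∀ i, t i ∣ n) (β : Fin r → ℂ) (hβ : ∀ i, β i ^ t i = α i) :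
    FiniteDimensional (cycloField K n)
      (IntermediateField.extendScalars (cyclo_le_kummer K α n t)) ∧
    IsGalois (cycloField K n)
      (IntermediateField.extendScalars (cyclo_le_kummer K α n t)) := by
  classical
  have ht0 : ∀ i, t i ≠ 0 := fun i h => hn.ne' (Nat.eq_zero_of_zero_dvd (h ▸ htn i))
  let a : Fin r → cycloField K n := fun i =>
    ⟨α i, (le_sup_left : K ≤ cycloField K n) (hmem i)⟩
  let p : Polynomial (cycloField K n) := ∏ i, (Polynomial.X ^ t i - Polynomial.C (a i))
  have hp0 : p ≠ 0 := Finset.prod_ne_zero_iff.mpr fun i _ =>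
    Polynomial.X_pow_sub_C_ne_zero (Nat.pos_of_ne_zero (ht0 i)) _
  have hroot : ∀ z : ℂ, z ∈ p.rootSet ℂ ↔ ∃ i, z ^ t i = α i := by
    intro z
    rw [Polynomial.mem_rootSet]
    simp only [ne_eq, hp0, not_false_eq_true, true_and]
    simp only [p, map_prod, Finset.prod_eq_zero_iff, Finset.mem_univ, true_and, map_sub, map_pow,
      Polynomial.aeval_X, Polynomial.aeval_C, sub_eq_zero]
    rfl
  have hL := kummer_ext_eq_adjoin K α hα0 n t hn htn β hβ (p.rootSet ℂ)
    (fun i => (hroot _).mpr ⟨i, hβ i⟩) (fun z hz => Set.mem_iUnion.mpr ((hroot z).mp hz))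
  rw [hL]
  have hsp : p.IsSplittingField (cycloField K n)
      (IntermediateField.adjoin (cycloField K n) (p.rootSet ℂ)) :=
    IntermediateField.adjoin_rootSet_isSplittingField (IsAlgClosed.splits _)
  have hfd := Polynomial.IsSplittingField.finiteDimensional
    (IntermediateField.adjoin (cycloField K n) (p.rootSet ℂ)) p
  have hno : Normal (cycloField K n)
    (IntermediateField.adjoin (cycloField K n) (p.rootSet ℂ)) := Normal.of_isSplittingField p
  exact ⟨hfd, { }⟩

/-- The degree of a Kummer extension generated by the `β i` is the index of the lattice of
exponents. -/
lemma kummer_index_aux (F Ω : Type*) [Field F] [Field Ω] [Algebra F Ω] {r : ℕ} (β : Fin r → Ω)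
    (hb0 : ∀ i, β i ≠ 0) (n : ℕ) [NeZero n] (ζ : F) (hζ : IsPrimitiveRoot ζ n)
    (c : Fin r → F) (hc : ∀ i, β i ^ n = algebraMap F Ω (c i))
    (L : IntermediateField F Ω) (hL : L = IntermediateField.adjoin F (Set.range β))
    [FiniteDimensional F L] [IsGalois F L]
    (P : AddSubgroup (Fin r → ℤ))
    (hP : ∀ e, e ∈ P ↔ ∃ x : F, algebraMap F Ω x = ∏ i, β i ^ e i) :
    Module.finrank F L = P.index := by
  have hbL : ∀ i, β i ∈ L := by
    intro i
    rw [hL]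
    exact IntermediateField.subset_adjoin _ _ ⟨i, rfl⟩
  let b : Fin r → Lˣ := fun i => Units.mk0 ⟨β i, hbL i⟩ (by
    intro h
    exact hb0 i (congrArg Subtype.val h))
  have hbv : ∀ i, algebraMap L Ω (b i : L) = β i := fun i => rfl
  let f : Multiplicative (Fin r → ℤ) →* Lˣ :=
    { toFun := fun e => ∏ i, b i ^ (Multiplicative.toAdd e i)
      map_one' := by simp
      map_mul' := by
        intro e e'
        simp [zpow_add, Finset.prod_mul_distrib] }
  have hf : ∀ e, f e = ∏ i, b i ^ (Multiplicative.toAdd e i) := fun e => rfl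
  have hfv : ∀ e, algebraMap L Ω ((f e : Lˣ) : L) = ∏ i, β i ^ (Multiplicative.toAdd e i) := by
    intro e
    rw [hf, Units.coe_prod, map_prod]
    refine Finset.prod_congr rfl fun i _ => ?_
    rw [Units.val_zpow_eq_zpow_val, map_zpow₀, hbv]
  have hinj : Function.Injective (algebraMap L Ω) := (algebraMap L Ω).injective
  have hidx : P.index = (AddSubgroup.toSubgroup P).index := (AddSubgroup.index_toSubgroup P).symm
  rw [hidx]
  refine kummer_card F L f n ζ hζ ?_ ?_ (AddSubgroup.toSubgroup P) ?_
  · intro e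
    refine ⟨∏ i, c i ^ (Multiplicative.toAdd e i), hinj ?_⟩
    rw [map_pow, hfv, ← IsScalarTower.algebraMap_apply, map_prod, ← Finset.prod_pow]
    refine Finset.prod_congr rfl fun i _ => ?_
    rw [map_zpow₀, ← hc, ← zpow_natCast, ← zpow_natCast, ← zpow_mul, ← zpow_mul, mul_comm]
  · intro σ τ h
    have h3 : σ.toAlgHom = τ.toAlgHom := by
      refine IntermediateField.algHom_ext_of_eq_adjoin _ hL ?_
      rintro _ ⟨i, rfl⟩
      have hi := h (Multiplicative.ofAdd (Pi.single i 1))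
      have hfi : ((f (Multiplicative.ofAdd (Pi.single i 1)) : Lˣ) : L) = ⟨β i, hbL i⟩ := by
        apply hinj
        rw [hfv, Finset.prod_eq_single i]
        · simp
        · intro j _ hj
          simp [Pi.single_eq_of_ne hj]
        · simp
      rw [hfi] at hi
      exact hi
    exact AlgEquiv.ext fun x => DFunLike.congr_fun h3 x
  · intro e
    refine Iff.trans (hP (Multiplicative.toAdd e)) ?_
    rw [← hfv]
    refine exists_congr fun x => ?_
    rw [IsScalarTower.algebraMap_apply F L Ω]
    exact hinj.eq_iff

/-- The degree of the Kummer extension as the index of the lattice of exponents. -/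
lemma kummer_degree_eq_index (K : IntermediateField ℚ ℂ) {r : ℕ} (α : Fin r → ℂ)
    (hmem : ∀ i, α i ∈ K)
    (hα0 : ∀ i, α i ≠ 0) (n : ℕ) (t : Fin r → ℕ) (hn : 0 < n)
    (htn : ∀ i, t i ∣ n) (β : Fin r → ℂ) (hβ : ∀ i, β i ^ t i = α i)
    (P : AddSubgroup (Fin r → ℤ))
    (hP : ∀ e, e ∈ P ↔ ∏ i, β i ^ e i ∈ cycloField K n) :
    Module.finrank (cycloField K n)
      (IntermediateField.extendScalars (cyclo_le_kummer K α n t)) = P.index := by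
  have ht0 : ∀ i, t i ≠ 0 := fun i h => hn.ne' (Nat.eq_zero_of_zero_dvd (h ▸ htn i))
  have hb0 : ∀ i, β i ≠ 0 := by
    intro i h
    apply hα0 i
    rw [← hβ i, h, zero_pow (ht0 i)]
  obtain ⟨hfd, hgal⟩ := kummer_ext_galois K α hmem hα0 n t hn htn β hβ
  have hL := kummer_ext_eq_adjoin K α hα0 n t hn htn β hβ (Set.range β)
    (fun i => ⟨i, rfl⟩) (by rintro _ ⟨i, rfl⟩; exact Set.mem_iUnion.mpr ⟨i, hβ i⟩)
  have : NeZero n := ⟨hn.ne'⟩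
  have hαF : ∀ i, α i ∈ cycloField K n := fun i => (le_sup_left : K ≤ cycloField K n) (hmem i)
  have hζ : IsPrimitiveRoot (⟨primRoot n, primRoot_mem_cyclo K n⟩ : cycloField K n) n :=
    IsPrimitiveRoot.of_map_of_injective (f := algebraMap (cycloField K n) ℂ)
      (primRoot_spec n hn.ne') (algebraMap (cycloField K n) ℂ).injective
  have hc : ∀ i, β i ^ n ∈ cycloField K n := by
    intro i
    obtain ⟨c, hc⟩ := htn i
    have hbn : β i ^ n = α i ^ c := by rw [hc, pow_mul, hβ]
    rw [hbn]
    exact pow_mem (hαF i) c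
  refine kummer_index_aux (cycloField K n) ℂ β hb0 n _ hζ (fun i => ⟨β i ^ n, hc i⟩)
    (fun i => rfl) _ hL P ?_
  intro e
  rw [hP]
  constructor
  · intro h
    exact ⟨⟨_, h⟩, rfl⟩
  · rintro ⟨x, hx⟩
    rw [← hx]
    exact x.2

/-- Let `K ⊆ ℂ` be a number field and `α_1,…,α_r ∈ K^×` multiplicatively
independent. There is a positive integer `B` such that for all positive integers
`n, t_1,…,t_r` with `t_i ∣ n` for all `i`, the degree
`[K(ζ_n, α_1^{1/t_1},…,α_r^{1/t_r}) : K(ζ_n)]` divides `t_1⋯t_r`, and the quotient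
`(t_1⋯t_r)/[K(ζ_n, α_1^{1/t_1},…,α_r^{1/t_r}) : K(ζ_n)]` divides `B`. -/
theorem kummer_degree_failure_bounded {r : ℕ} (K : IntermediateField ℚ ℂ)
    [FiniteDimensional ℚ K] (α : Fin r → ℂ)
    (hmem : ∀ i, α i ∈ K) (hα0 : ∀ i, α i ≠ 0)
    (hind : ∀ e : Fin r → ℤ, ∏ i, α i ^ e i = 1 → e = 0) :
    ∃ B : ℕ, 0 < B ∧ ∀ (n : ℕ) (t : Fin r → ℕ), 0 < n → (∀ i, 0 < t i) →
      (∀ i, t i ∣ n) →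
      Module.finrank (cycloField K n)
          (IntermediateField.extendScalars (cyclo_le_kummer K α n t)) ∣ ∏ i, t i ∧
      (∏ i, t i) / Module.finrank (cycloField K n)
          (IntermediateField.extendScalars (cyclo_le_kummer K α n t)) ∣ B := by
  have : NumberField K := { }
  let a : Fin r → K := fun i => ⟨α i, hmem i⟩
  have ha0 : ∀ i, a i ≠ 0 := fun i h => hα0 i (congrArg Subtype.val h)
  have hcoe : ∀ e : Fin r → ℤ, ((∏ i, a i ^ e i : K) : ℂ) = ∏ i, α i ^ e i := by
    intro e
    rw [← IntermediateField.coe_val, map_prod]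
    refine Finset.prod_congr rfl fun i _ => ?_
    rw [map_zpow₀]
    rfl
  obtain ⟨M, hM, hsat⟩ := sat_bound K a ha0 (fun e he => hind e (by
    rw [← hcoe, he]; rfl))
  obtain ⟨w, hw, htors⟩ := tors_bound K
  refine ⟨∏ _i : Fin r, (M * w), Finset.prod_pos fun _ _ => Nat.mul_pos hM hw, ?_⟩
  intro n t hn ht htn
  have hβ : ∀ i, ∃ z : ℂ, z ^ t i = α i := fun i => IsAlgClosed.exists_pow_nat_eq _ (ht i)
  choose β hβ using hβ
  have hb0 : ∀ i, β i ≠ 0 := by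
    intro i h
    apply hα0 i
    rw [← hβ i, h, zero_pow (ht i).ne']
  let P : AddSubgroup (Fin r → ℤ) :=
    { carrier := {e | ∏ i, β i ^ e i ∈ cycloField K n}
      zero_mem' := by simp
      add_mem' := by
        intro e e' h h'
        have := mul_mem (S := IntermediateField ℚ ℂ) (s := cycloField K n) h h'
        simpa [← Finset.prod_mul_distrib, ← zpow_add₀ (hb0 _)] using this
      neg_mem' := by
        intro e h
        have := inv_mem (S := IntermediateField ℚ ℂ) (s := cycloField K n) h
        simpa using this }
  have hdeg := kummer_degree_eq_index K α hmem hα0 n t hn htn β hβ P (fun e => Iff.rfl)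
  rw [hdeg]
  -- the sublattice and the superlattice
  let D : (Fin r → ℕ) → AddSubgroup (Fin r → ℤ) := fun m =>
    { carrier := {e | ∀ i, (m i : ℤ) ∣ e i}
      zero_mem' := by simp
      add_mem' := by
        intro e e' h h' i
        exact dvd_add (h i) (h' i)
      neg_mem' := by
        intro e h i
        exact (dvd_neg).mpr (h i) }
  have hD : ∀ m, (D m).index = ∏ i, m i := fun m => index_pi_zmultiples m (D m) (fun e => Iff.rfl)
  have h1 : D t ≤ P := by
    intro e he
    change ∏ i, β i ^ e i ∈ cycloField K n
    refine prod_mem fun i _ => ?_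
    obtain ⟨c, hc⟩ := he i
    rw [hc, zpow_mul, zpow_natCast, hβ]
    exact zpow_mem ((le_sup_left : K ≤ cycloField K n) (hmem i)) _
  have h2 : P ≤ D (fun i => t i / Nat.gcd (t i) (M * w)) := by
    intro e he i
    have hpow : (∏ i, β i ^ e i) ^ n = ((∏ i, a i ^ (e i * (n / t i : ℕ)) : K) : ℂ) := by
      rw [hcoe, ← Finset.prod_pow]
      refine Finset.prod_congr rfl fun i _ => ?_
      have hc : n = t i * (n / t i) := (Nat.mul_div_cancel' (htn i)).symm
      rw [← hβ i, ← zpow_natCast, ← zpow_natCast, ← zpow_mul, ← zpow_mul]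
      congr 1
      nth_rewrite 1 [hc]
      push_cast
      ring
    obtain ⟨δ, hδ⟩ := cyclo_power K n hn w htors _
      (Finset.prod_ne_zero_iff.mpr fun i _ => zpow_ne_zero _ (ha0 i)) _ he hpow
    have h3 := hsat n hn (fun i => e i * (n / t i : ℕ) * w) δ (by
      rw [hδ, ← Finset.prod_pow]
      refine Finset.prod_congr rfl fun i _ => ?_
      rw [← zpow_natCast, ← zpow_mul]) i
    have hc : n = t i * (n / t i) := (Nat.mul_div_cancel' (htn i)).symm
    have hq0 : ((n / t i : ℕ) : ℤ) ≠ 0 := by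
      intro h
      have h' : n / t i = 0 := by exact_mod_cast h
      rw [h'] at hc
      omega
    have h4 : (t i : ℤ) ∣ (M * w : ℕ) * e i := by
      refine Int.dvd_of_mul_dvd_mul_left hq0 ?_
      have h5 : ((n / t i : ℕ) : ℤ) * t i = n := by
        nth_rewrite 2 [hc]
        push_cast
        ring
      rw [h5]
      convert h3 using 1
      push_cast
      ring
    -- divide by the gcd
    have hg : 0 < Nat.gcd (t i) (M * w) := Nat.gcd_pos_of_pos_left _ (ht i)
    have h6 : t i ∣ (M * w) * (e i).natAbs := by
      have := Int.natAbs_dvd_natAbs.mpr h4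
      rwa [Int.natAbs_mul, Int.natAbs_natCast, Int.natAbs_natCast] at this
    have h7 : t i / Nat.gcd (t i) (M * w) ∣ (e i).natAbs := by
      apply (Nat.coprime_div_gcd_div_gcd hg).dvd_of_dvd_mul_left (k := t i / Nat.gcd (t i) (M * w))
      rw [← Nat.mul_div_right_comm (Nat.gcd_dvd_right _ _)]
      exact Nat.div_dvd_div (Nat.gcd_dvd_left _ _) h6
    exact Int.natCast_dvd.mpr h7
  have i1 := AddSubgroup.index_dvd_of_le h1
  have i2 := AddSubgroup.index_dvd_of_le h2
  rw [hD] at i1 i2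
  refine ⟨i1, ?_⟩
  have hprod : (∏ i, t i / Nat.gcd (t i) (M * w)) * ∏ i, Nat.gcd (t i) (M * w) = ∏ i, t i := by
    rw [← Finset.prod_mul_distrib]
    exact Finset.prod_congr rfl fun i _ => Nat.div_mul_cancel (Nat.gcd_dvd_left _ _)
  have htpos : 0 < ∏ i, t i := Finset.prod_pos fun i _ => ht i
  have hPpos : 0 < P.index := Nat.pos_of_dvd_of_pos i1 htpos
  obtain ⟨s, hs⟩ := i2
  obtain ⟨q, hq⟩ := i1
  rw [hq, Nat.mul_div_cancel_left _ hPpos]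
  refine dvd_trans ?_ (Finset.prod_dvd_prod_of_dvd _ _ fun i _ => Nat.gcd_dvd_right (t i) (M * w))
  refine ⟨s, ?_⟩
  have hA : 0 < ∏ i, t i / Nat.gcd (t i) (M * w) :=
    Nat.pos_of_ne_zero fun h => by rw [h, zero_mul] at hprod; omega
  apply Nat.eq_of_mul_eq_mul_left hA
  rw [hprod, hq, hs]
  ring
end

section
/- There exists a positive integer B (depending only on K and α_1,…,α_r) such that for all positive integers n, t_1,…,t_r with t_i dividing n for every i, one has [K:ℚ]·B·[K(ζ_n, α_1^{1/t_1},…,α_r^{1/t_r}) : K] ≥ φ(n)·t_1·t_2⋯t_r, where φ is Euler's totient function. -/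
open scoped BigOperators

lemma aux_exists_exponent {F : Type*} [Field F] [NumberField F] {r : ℕ} (a : Fin r → F)
    (ha : ∀ i, a i ≠ 0) : ∃ M : ℕ, 0 < M ∧ ∀ (n : ℕ) (b : F) (e : Fin r → ℤ), 0 < n →
      b ^ n = ∏ i, a i ^ e i → ∃ f : Fin r → ℤ, b ^ M = ∏ i, a i ^ f i := by
  classical
  have hc : ∀ i, ∃ c : ℤ, c ≠ 0 ∧ IsIntegral ℤ ((c : F) * a i) := by
    intro i
    have halg : IsAlgebraic ℤ (a i) := by
      have : IsAlgebraic ℚ (a i) := Algebra.IsAlgebraic.isAlgebraic _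
      exact (IsFractionRing.isAlgebraic_iff ℤ ℚ F).mpr this
    obtain ⟨c, hc0, hc⟩ := halg.exists_integral_multiple
    exact ⟨c, hc0, by simpa [zsmul_eq_mul] using hc⟩
  choose c hc0 hcint using hc
  let D : (F →+* ℂ) → ℝ := fun φ => ∏ i, max ‖φ (c i)‖ ‖φ ((c i : F) * a i)‖
  have hD : ∀ φ, 0 ≤ D φ := fun φ => Finset.prod_nonneg fun i _ => le_max_of_le_left (norm_nonneg _)
  have hT := NumberField.Embeddings.finite_of_norm_le F ℂ (∑ φ, D φ)
  let C : F := ∏ i, (c i : F)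
  have hC : C ≠ 0 := Finset.prod_ne_zero_iff.mpr fun i _ => by exact_mod_cast hc0 i
  let S : Set F := {b | ∃ n : ℕ, 0 < n ∧ ∃ e : Fin r → ℕ, (∀ i, e i < n) ∧ b ^ n = ∏ i, a i ^ e i}
  have hS : S.Finite := by
    refine (hT.preimage ((mul_right_injective₀ hC).injOn)).subset ?_
    rintro b ⟨n, hn, e, he, hb⟩
    have key : (C * b) ^ n = ∏ i, (c i : F) ^ (n - e i) * ((c i : F) * a i) ^ (e i) := by
      rw [mul_pow, hb, ← Finset.prod_pow, ← Finset.prod_mul_distrib]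
      refine Finset.prod_congr rfl fun i _ => ?_
      rw [mul_pow, ← mul_assoc, ← pow_add, Nat.sub_add_cancel (he i).le]
    refine ⟨IsIntegral.of_pow hn ?_, fun φ => ?_⟩
    · simp only [key]
      refine IsIntegral.prod _ fun i _ => IsIntegral.mul (IsIntegral.pow ?_ _) ((hcint i).pow _)
      exact isIntegral_algebraMap (R := ℤ) (x := c i)
    · refine le_trans ?_ (Finset.single_le_sum (fun φ _ => hD φ) (Finset.mem_univ φ))
      refine le_of_pow_le_pow_left₀ hn.ne' (hD φ) ?_
      rw [← norm_pow, ← map_pow, key, map_prod, norm_prod, ← Finset.prod_pow]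
      refine Finset.prod_le_prod (fun i _ => norm_nonneg _) fun i _ => ?_
      rw [map_mul, map_pow, map_pow, norm_mul, norm_pow, norm_pow]
      calc _ ≤ (max ‖φ (c i)‖ ‖φ ((c i : F) * a i)‖) ^ (n - e i) *
            (max ‖φ (c i)‖ ‖φ ((c i : F) * a i)‖) ^ (e i) := by
              gcongr
              · exact le_max_left _ _
              · exact le_max_right _ _
        _ = _ := by rw [← pow_add, Nat.sub_add_cancel (he i).le]
  have hm : ∀ b : F, ∃ n : ℕ, 0 < n ∧ (b ∈ S → ∃ e : Fin r → ℕ, b ^ n = ∏ i, a i ^ e i) := by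
    intro b
    by_cases h : b ∈ S
    · obtain ⟨n, hn, e, _, hb⟩ := h
      exact ⟨n, hn, fun _ => ⟨e, hb⟩⟩
    · exact ⟨1, one_pos, fun h' => absurd h' h⟩
  choose m hm0 hm using hm
  refine ⟨∏ b ∈ hS.toFinset, m b, Finset.prod_pos fun b _ => hm0 b, ?_⟩
  intro n b e hn hb
  let q : Fin r → ℤ := fun i => e i / n
  let g : F := ∏ i, a i ^ q i
  have hg : g ≠ 0 := Finset.prod_ne_zero_iff.mpr fun i _ => zpow_ne_zero _ (ha i)
  have hn' : (n : ℤ) ≠ 0 := by exact_mod_cast hn.ne'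
  have hmem : b / g ∈ S := by
    refine ⟨n, hn, fun i => (e i % n).toNat, fun i => ?_, ?_⟩
    · have := Int.emod_lt_of_pos (e i) (by exact_mod_cast hn : (0 : ℤ) < n)
      have := Int.emod_nonneg (e i) hn'
      show (e i % n).toNat < n
      omega
    · rw [div_pow, hb, ← Finset.prod_pow, ← Finset.prod_div_distrib]
      refine Finset.prod_congr rfl fun i _ => ?_
      rw [← zpow_natCast, ← zpow_natCast, Int.toNat_of_nonneg (Int.emod_nonneg _ hn'), ← zpow_mul,
        ← zpow_sub₀ (ha i)]
      congr 1
      have := Int.emod_add_mul_ediv (e i) n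
      simp only [q]
      linarith
  obtain ⟨s, hs⟩ : m (b / g) ∣ ∏ b ∈ hS.toFinset, m b :=
    Finset.dvd_prod_of_mem _ (hS.mem_toFinset.mpr hmem)
  obtain ⟨f, hf⟩ := hm _ hmem
  refine ⟨fun i => f i * s + q i * (∏ b ∈ hS.toFinset, m b : ℕ), ?_⟩
  calc b ^ (∏ b ∈ hS.toFinset, m b) = (b / g) ^ (∏ b ∈ hS.toFinset, m b) *
        g ^ (∏ b ∈ hS.toFinset, m b) := by rw [← mul_pow, div_mul_cancel₀ _ hg]
    _ = _ := by
      conv_lhs => enter [1]; rw [hs, pow_mul, hf]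
      simp only [g]
      rw [← Finset.prod_pow, ← Finset.prod_pow, ← Finset.prod_mul_distrib]
      refine Finset.prod_congr rfl fun i _ => ?_
      rw [zpow_add₀ (ha i), zpow_mul, zpow_mul]
      simp only [zpow_natCast]

/-- Schinzel-type lemma. -/
lemma aux_schinzel {F E : Type*} [Field F] [NumberField F] [Field E] [Algebra F E]
    [FiniteDimensional F E] [IsGalois F E] (n : ℕ) (hn : 0 < n) (ζ : E) (hζ : IsPrimitiveRoot ζ n)
    (γ : E) (hγ : γ ≠ 0) (a : F) (ha : γ ^ n = algebraMap F E a)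
    (hfix : ∀ σ : Gal(E/F), σ ζ = ζ → σ γ = γ) :
    ∃ d : F, a ^ (NumberField.Units.torsionOrder F) = d ^ n := by
  have : NeZero n := ⟨hn.ne'⟩
  have ha0 : a ≠ 0 := by
    rintro rfl
    rw [map_zero] at ha
    exact hγ (pow_eq_zero_iff hn.ne' |>.mp ha)
  have hex : ∀ σ : Gal(E/F), ∃ k : ℕ, σ ζ = ζ ^ k := by
    intro σ
    obtain ⟨k, _, hk⟩ := hζ.eq_pow_of_pow_eq_one (ξ := σ ζ) (by rw [← map_pow, hζ.pow_eq_one, map_one])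
    exact ⟨k, hk.symm⟩
  choose k hk using hex
  have hcomm : ∀ σ τ : Gal(E/F), σ (τ γ) = τ (σ γ) := by
    intro σ τ
    have h1 : ((τ * σ)⁻¹ * (σ * τ)) ζ = ζ := by
      have : (σ * τ) ζ = (τ * σ) ζ := by
        rw [AlgEquiv.mul_apply, AlgEquiv.mul_apply, hk τ, hk σ, map_pow, map_pow, hk σ, hk τ,
          ← pow_mul, ← pow_mul, mul_comm]
      rw [AlgEquiv.mul_apply, this, ← AlgEquiv.mul_apply, inv_mul_cancel, AlgEquiv.one_apply]
    have h2 := hfix _ h1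
    have h3 := congrArg (τ * σ) h2
    rw [← AlgEquiv.mul_apply, mul_inv_cancel_left] at h3
    simpa [AlgEquiv.mul_apply] using h3
  have hroot : ∀ τ : Gal(E/F), ∃ c : ℕ, τ γ = ζ ^ c * γ := by
    intro τ
    obtain ⟨c, _, hc⟩ := hζ.eq_pow_of_pow_eq_one (ξ := τ γ / γ) (by
      rw [div_pow, ← map_pow, ha, AlgEquiv.commutes, div_self]
      simpa using ha0)
    exact ⟨c, by rw [hc, div_mul_cancel₀ _ hγ]⟩
  have hσγ : ∀ σ : Gal(E/F), σ γ ≠ 0 := fun σ => by simpa using hγ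
  let J : AddSubgroup ℤ :=
    { carrier := {m | ∃ d : F, d ≠ 0 ∧ a ^ m = d ^ n}
      zero_mem' := ⟨1, one_ne_zero, by simp⟩
      add_mem' := by
        rintro x y ⟨d, hd, h⟩ ⟨d', hd', h'⟩
        exact ⟨d * d', mul_ne_zero hd hd', by rw [zpow_add₀ ha0, h, h', mul_pow]⟩
      neg_mem' := by
        rintro x ⟨d, hd, h⟩
        exact ⟨d⁻¹, inv_ne_zero hd, by rw [zpow_neg, h, inv_pow]⟩ }
  have hnJ : (n : ℤ) ∈ J := ⟨a, ha0, by simp⟩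
  have hkJ : ∀ σ, (k σ : ℤ) - 1 ∈ J := by
    intro σ
    have : γ ^ (k σ) / σ γ ∈ Set.range (algebraMap F E) := by
      rw [IsGalois.mem_range_algebraMap_iff_fixed]
      intro τ
      obtain ⟨c, hc⟩ := hroot τ
      rw [map_div₀, map_pow, ← hcomm σ τ, hc, map_mul, map_pow, hk, mul_pow, ← pow_mul, ← pow_mul,
        mul_comm c, mul_div_mul_left]
      exact pow_ne_zero _ (hζ.ne_zero hn.ne')
    obtain ⟨d, hd⟩ := this
    have hd0 : d ≠ 0 := by
      rintro rfl
      rw [map_zero] at hd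
      exact div_ne_zero (pow_ne_zero _ hγ) (hσγ σ) hd.symm
    refine ⟨d, hd0, ?_⟩
    apply (algebraMap F E).injective
    rw [map_pow, hd, div_pow, ← map_pow, ← pow_mul, mul_comm, pow_mul, ha, AlgEquiv.commutes,
      zpow_sub₀ ha0]
    simp
  obtain ⟨g, hg⟩ := Int.subgroup_cyclic J
  have hg' : ∀ x, x ∈ J ↔ g ∣ x := by
    intro x
    rw [hg, ← AddSubgroup.zmultiples_eq_closure, Int.mem_zmultiples_iff]
  have hgn : g.natAbs ∣ n := by
    have := (hg' _).mp hnJ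
    exact Int.natAbs_dvd_natAbs.mpr this
  obtain ⟨q, hq⟩ := hgn
  have hg0 : g.natAbs ≠ 0 := by rintro h; rw [h] at hq; omega
  have hprim : IsPrimitiveRoot (ζ ^ q) g.natAbs := hζ.pow hn (by rw [hq, mul_comm])
  have hK : ζ ^ q ∈ Set.range (algebraMap F E) := by
    rw [IsGalois.mem_range_algebraMap_iff_fixed]
    intro σ
    rw [map_pow, hk, ← pow_mul, mul_comm, pow_mul]
    have h1 := (hg' _).mp (hkJ σ)
    have h2 : (ζ ^ q) ^ ((k σ : ℤ) - 1) = 1 :=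
      (hprim.zpow_eq_one_iff_dvd _).mpr (Int.natAbs_dvd.mpr h1)
    rw [zpow_sub₀ (pow_ne_zero _ (hζ.ne_zero hn.ne')), zpow_natCast, zpow_one,
      div_eq_one_iff_eq (pow_ne_zero _ (hζ.ne_zero hn.ne'))] at h2
    exact h2
  obtain ⟨z, hz⟩ := hK
  have hzprim : IsPrimitiveRoot z g.natAbs :=
    (IsPrimitiveRoot.map_iff_of_injective (algebraMap F E).injective).mp (hz ▸ hprim)
  have : NeZero g.natAbs := ⟨hg0⟩
  have hdvd := NumberField.Units.dvd_torsionOrder_of_isPrimitiveRoot hzprim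
  obtain ⟨d, _, hd⟩ := (hg' (NumberField.Units.torsionOrder F : ℤ)).mpr
    (Int.natAbs_dvd.mp (by exact_mod_cast hdvd))
  exact ⟨d, by exact_mod_cast hd⟩

lemma aux_card_hom {G E : Type*} [Group G] [Finite G] [Field E] (T : Finset (G →* E)) :
    T.card ≤ Nat.card G := by
  classical
  have := Fintype.ofFinite G
  have h := (linearIndependent_monoidHom G E).comp (Subtype.val : T → _) Subtype.val_injective
  have := h.fintype_card_le_finrank
  simpa [Nat.card_eq_fintype_card] using this

lemma aux_totient {F E : Type*} [Field F] [NumberField F] [Field E] [Algebra F E]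
    [FiniteDimensional F E] (n : ℕ) (hn : 0 < n) (ζ : E) (hζ : IsPrimitiveRoot ζ n) :
    n.totient ≤ Module.finrank ℚ F * Module.finrank F (IntermediateField.adjoin F {ζ}) := by
  have : CharZero E := charZero_of_injective_algebraMap (algebraMap F E).injective
  have hmem : ζ ∈ IntermediateField.adjoin F {ζ} :=
    IntermediateField.mem_adjoin_simple_self F ζ
  have hz : IsPrimitiveRoot (⟨ζ, hmem⟩ : IntermediateField.adjoin F {ζ}) n :=
    (IsPrimitiveRoot.map_iff_of_injective
      (algebraMap (IntermediateField.adjoin F {ζ}) E).injective).mp hζ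
  rw [Module.finrank_mul_finrank ℚ F (IntermediateField.adjoin F {ζ})]
  have : FiniteDimensional ℚ (IntermediateField.adjoin F {ζ}) := FiniteDimensional.trans ℚ F _
  have h := minpoly.natDegree_le (A := ℚ) (⟨ζ, hmem⟩ : IntermediateField.adjoin F {ζ})
  rwa [← Polynomial.cyclotomic_eq_minpoly_rat hz hn, Polynomial.natDegree_cyclotomic] at h

lemma aux_kummer {F E : Type*} [Field F] [NumberField F] [Field E] [Algebra F E]
    [FiniteDimensional F E] [IsGalois F E] {r : ℕ} (a : Fin r → F) (ha : ∀ i, a i ≠ 0)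
    (hind : ∀ e : Fin r → ℤ, ∏ i, a i ^ e i = 1 → e = 0)
    (M : ℕ) (hM0 : 0 < M) (hM : ∀ (n : ℕ) (b : F) (e : Fin r → ℤ), 0 < n →
      b ^ n = ∏ i, a i ^ e i → ∃ f : Fin r → ℤ, b ^ M = ∏ i, a i ^ f i)
    (n : ℕ) (hn : 0 < n) (t : Fin r → ℕ) (ht : ∀ i, 0 < t i) (htn : ∀ i, t i ∣ n)
    (ζ : E) (hζ : IsPrimitiveRoot ζ n) (β : Fin r → E)
    (hβ : ∀ i, β i ^ t i = algebraMap F E (a i)) :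
    ∏ i, t i ≤ (M * NumberField.Units.torsionOrder F) ^ r *
      Module.finrank (IntermediateField.adjoin F {ζ}) E := by
  classical
  have : NeZero n := ⟨hn.ne'⟩
  set W := NumberField.Units.torsionOrder F with hW
  have hC0 : 0 < M * W := Nat.mul_pos hM0 (NumberField.Units.torsionOrder_pos F)
  set C := M * W with hC
  let N := (IntermediateField.adjoin F {ζ}).fixingSubgroup
  have hN : ∀ σ : Gal(E/F), σ ∈ N ↔ σ ζ = ζ := by
    intro σ
    rw [IntermediateField.mem_fixingSubgroup_iff]
    refine ⟨fun h => h ζ (IntermediateField.mem_adjoin_simple_self F ζ), fun h y hy => ?_⟩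
    induction hy using IntermediateField.adjoin_induction with
    | mem y hy => rw [Set.mem_singleton_iff.mp hy, h]
    | algebraMap y => exact σ.commutes y
    | add y z _ _ hy hz => rw [map_add, hy, hz]
    | inv y _ hy => rw [map_inv₀, hy]
    | mul y z _ _ hy hz => rw [map_mul, hy, hz]
  rw [← IsGalois.card_fixingSubgroup_eq_finrank]
  have hβ0 : ∀ i, β i ≠ 0 := by
    intro i h
    have := hβ i
    rw [h, zero_pow (ht i).ne'] at this
    exact ha i ((map_eq_zero _).mp this.symm)
  choose s hs using htn
  have hβn : ∀ i, β i ^ n = algebraMap F E (a i ^ s i) := by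
    intro i
    conv_lhs => rw [hs i, pow_mul, hβ, ← map_pow]
  let x : (∀ i, Fin (t i)) → E := fun e => ∏ i, β i ^ (e i : ℕ)
  have hx0 : ∀ e, x e ≠ 0 := fun e => Finset.prod_ne_zero_iff.mpr fun i _ => pow_ne_zero _ (hβ0 i)
  have hxn : ∀ e, x e ^ n = algebraMap F E (∏ i, a i ^ (s i * e i)) := by
    intro e
    simp only [x]
    rw [← Finset.prod_pow, map_prod]
    refine Finset.prod_congr rfl fun i _ => ?_
    rw [← pow_mul, mul_comm, pow_mul, hβn, ← map_pow, ← pow_mul]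
  have hμ : ∀ (σ τ : Gal(E/F)) e, σ ζ = ζ → σ (τ (x e) / x e) = τ (x e) / x e := by
    intro σ τ e hσ
    obtain ⟨c, _, hc⟩ := hζ.eq_pow_of_pow_eq_one (ξ := τ (x e) / x e) (by
      rw [div_pow, ← map_pow, hxn, AlgEquiv.commutes, ← hxn, div_self (pow_ne_zero _ (hx0 e))])
    rw [← hc, map_pow, hσ]
  let χ : (∀ i, Fin (t i)) → (N →* E) := fun e =>
    { toFun := fun σ => (σ : Gal(E/F)) (x e) / x e
      map_one' := by simp [hx0 e]
      map_mul' := by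
        intro σ τ
        have h := hμ σ τ e ((hN σ).mp σ.2)
        rw [map_div₀, div_eq_iff (by simpa using hx0 e)] at h
        rw [Subgroup.coe_mul, AlgEquiv.mul_apply, h]
        ring }
  let fl : (∀ i, Fin (t i)) → (Fin r → Fin C) := fun e i =>
    ⟨C * e i / t i, Nat.div_lt_of_lt_mul (by
      rw [mul_comm (t i)]; exact Nat.mul_lt_mul_of_pos_left (e i).2 hC0)⟩
  have hinj : Function.Injective (fun e => (χ e, fl e)) := by
    intro e e' h
    simp only [Prod.mk.injEq] at h
    obtain ⟨h1, h2⟩ := h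
    have hfix : ∀ σ : Gal(E/F), σ ζ = ζ → σ (x e / x e') = x e / x e' := by
      intro σ hσ
      have h3 : σ (x e) / x e = σ (x e') / x e' := DFunLike.congr_fun h1 ⟨σ, (hN σ).mpr hσ⟩
      have : σ (x e') ≠ 0 := by simpa using hx0 e'
      rw [div_eq_div_iff (hx0 e) (hx0 e')] at h3
      rw [map_div₀, div_eq_div_iff this (hx0 e'), h3, mul_comm]
    obtain ⟨d, hd⟩ := aux_schinzel n hn ζ hζ (x e / x e') (div_ne_zero (hx0 e) (hx0 e'))
      (∏ i, a i ^ ((s i : ℤ) * ((e i : ℤ) - e' i))) (by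
        rw [div_pow, hxn, hxn, ← map_div₀, ← Finset.prod_div_distrib]
        congr 1
        refine Finset.prod_congr rfl fun i _ => ?_
        rw [mul_sub, zpow_sub₀ (ha i)]
        norm_cast) hfix
    rw [← hW] at hd
    have hd' : d ^ n = ∏ i, a i ^ ((s i : ℤ) * ((e i : ℤ) - e' i) * W) := by
      rw [← hd, ← Finset.prod_pow]
      refine Finset.prod_congr rfl fun i _ => ?_
      rw [zpow_mul _ _ (W : ℤ), zpow_natCast]
    obtain ⟨f, hf⟩ := hM n d _ hn hd'
    have hrel : ∏ i, a i ^ ((s i : ℤ) * ((e i : ℤ) - e' i) * W * M - f i * n) = 1 := by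
      have e1 : (d ^ n) ^ M = (d ^ M) ^ n := by rw [← pow_mul, ← pow_mul, mul_comm]
      rw [hd', hf, ← Finset.prod_pow, ← Finset.prod_pow] at e1
      have : ∀ i, a i ^ ((s i : ℤ) * ((e i : ℤ) - e' i) * W * M - f i * n) =
          (a i ^ ((s i : ℤ) * ((e i : ℤ) - e' i) * W)) ^ M / (a i ^ f i) ^ n := by
        intro i
        rw [zpow_sub₀ (ha i), zpow_mul _ _ (M : ℤ), zpow_mul _ _ (n : ℤ), zpow_natCast,
          zpow_natCast]
      rw [Finset.prod_congr rfl fun i _ => this i, Finset.prod_div_distrib, e1, div_self]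
      exact Finset.prod_ne_zero_iff.mpr fun i _ => pow_ne_zero _ (zpow_ne_zero _ (ha i))
    have hz := hind _ hrel
    funext i
    have hzi := congrFun hz i
    simp only [Pi.zero_apply] at hzi
    have hsi : (s i : ℤ) ≠ 0 := by
      intro h0
      have h0' : s i = 0 := by exact_mod_cast h0
      have := hs i
      rw [h0', mul_zero] at this
      omega
    have hni : (n : ℤ) = t i * s i := by exact_mod_cast hs i
    have hdv : (C : ℤ) * ((e i : ℤ) - e' i) = t i * f i := by
      apply mul_left_cancel₀ hsi
      rw [hni] at hzi
      rw [hC]; push_cast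
      linarith
    have hfl : C * (e i : ℕ) / t i = C * (e' i : ℕ) / t i := congrArg Fin.val (congrFun h2 i)
    have q1 := Nat.div_add_mod (C * (e i : ℕ)) (t i)
    have q2 := Nat.div_add_mod (C * (e' i : ℕ)) (t i)
    have q3 := Nat.mod_lt (C * (e i : ℕ)) (ht i)
    have q4 := Nat.mod_lt (C * (e' i : ℕ)) (ht i)
    rw [hfl] at q1
    have hdvd : (t i : ℤ) ∣ (C * (e i : ℕ) : ℕ) - (C * (e' i : ℕ) : ℕ) := by
      refine ⟨f i, ?_⟩
      rw [← hdv]; push_cast; ring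
    have hzero : ((C * (e i : ℕ) : ℕ) : ℤ) - (C * (e' i : ℕ) : ℕ) = 0 := by
      apply Int.eq_zero_of_abs_lt_dvd hdvd
      rw [abs_lt]
      generalize C * (e i : ℕ) = A at *
      generalize C * (e' i : ℕ) = B at *
      generalize t i * (B / t i) = Q at *
      constructor <;> omega
    have : C * (e i : ℕ) = C * (e' i : ℕ) := by
      have := sub_eq_zero.mp hzero
      exact_mod_cast this
    exact Fin.ext (Nat.eq_of_mul_eq_mul_left hC0 this)
  have hcard : (Finset.univ : Finset (∀ i, Fin (t i))).card ≤
      ((Finset.univ.image χ) ×ˢ (Finset.univ : Finset (Fin r → Fin C))).card := by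
    refine Finset.card_le_card_of_injOn _ ?_ hinj.injOn
    intro e _
    simp
  rw [Finset.card_product, Finset.card_univ, Finset.card_univ, Fintype.card_pi, Fintype.card_fun,
    Fintype.card_fin, Fintype.card_fin] at hcard
  simp only [Fintype.card_fin] at hcard
  rw [mul_comm]
  exact hcard.trans (Nat.mul_le_mul_right _ (aux_card_hom _))

lemma aux_bound {F : Type*} [Field F] [NumberField F] {r : ℕ} (a : Fin r → F) (ha : ∀ i, a i ≠ 0)
    (hind : ∀ e : Fin r → ℤ, ∏ i, a i ^ e i = 1 → e = 0) :
    ∃ B : ℕ, 0 < B ∧ ∀ (E : Type) [Field E] [Algebra F E] [FiniteDimensional F E] [IsGalois F E]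
    (n : ℕ) (t : Fin r → ℕ) (ζ : E) (β : Fin r → E), 0 < n → (∀ i, 0 < t i) → (∀ i, t i ∣ n) →
    IsPrimitiveRoot ζ n → (∀ i, β i ^ t i = algebraMap F E (a i)) →
    n.totient * ∏ i, t i ≤ Module.finrank ℚ F * B * Module.finrank F E := by
  obtain ⟨M, hM0, hM⟩ := aux_exists_exponent a ha
  refine ⟨(M * NumberField.Units.torsionOrder F) ^ r,
    pow_pos (Nat.mul_pos hM0 (NumberField.Units.torsionOrder_pos F)) _, ?_⟩
  intro E _ _ _ _ n t ζ β hn ht htn hζ hβ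
  have h1 := aux_totient (F := F) n hn ζ hζ
  have h2 := aux_kummer a ha hind M hM0 hM n hn t ht htn ζ hζ β hβ
  rw [← Module.finrank_mul_finrank F (IntermediateField.adjoin F {ζ}) E]
  calc _ ≤ _ := Nat.mul_le_mul h1 h2
    _ = _ := by ring

lemma aux_galois {r : ℕ} (K : IntermediateField ℚ ℂ) (α : Fin r → K) (n : ℕ) (t : Fin r → ℕ)
    (hn : 0 < n) (ht : ∀ i, 0 < t i) :
    FiniteDimensional K (IntermediateField.extendScalars
      (base_le_kummer K (fun i => (α i : ℂ)) n t)) ∧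
    IsGalois K (IntermediateField.extendScalars (base_le_kummer K (fun i => (α i : ℂ)) n t)) := by
  have : NeZero n := ⟨hn.ne'⟩
  have hprim : IsPrimitiveRoot (primRoot n) n := Complex.isPrimitiveRoot_exp n hn.ne'
  let p : Polynomial K := (Polynomial.X ^ n - Polynomial.C 1) *
    ∏ i, (Polynomial.X ^ t i - Polynomial.C (α i))
  have hp0 : p ≠ 0 := mul_ne_zero (Polynomial.X_pow_sub_C_ne_zero hn 1)
    (Finset.prod_ne_zero_iff.mpr fun i _ => Polynomial.X_pow_sub_C_ne_zero (ht i) _)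
  have hroot : ∀ z : ℂ, z ∈ p.rootSet ℂ ↔ (z ^ n = 1 ∨ ∃ i, z ^ t i = α i) := by
    intro z
    rw [Polynomial.mem_rootSet, and_iff_right hp0]
    simp only [p, map_mul, map_sub, map_pow, map_prod, Polynomial.aeval_X, Polynomial.aeval_C,
      mul_eq_zero, Finset.prod_eq_zero_iff, sub_eq_zero, Finset.mem_univ, true_and, map_one]
    rfl
  have hE : IntermediateField.extendScalars (base_le_kummer K (fun i => (α i : ℂ)) n t) =
      IntermediateField.adjoin K (p.rootSet ℂ) := by
    apply le_antisymm
    · intro x hx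
      have hx' : x ∈ kummerField K (fun i => (α i : ℂ)) n t := hx
      have hle : kummerField K (fun i => (α i : ℂ)) n t ≤
          (IntermediateField.adjoin K (p.rootSet ℂ)).restrictScalars ℚ := by
        refine sup_le ?_ (IntermediateField.adjoin_le_iff.mpr ?_)
        · intro y hy
          exact (IntermediateField.adjoin K (p.rootSet ℂ)).algebraMap_mem ⟨y, hy⟩
        · intro y hy
          refine IntermediateField.subset_adjoin K (p.rootSet ℂ) ((hroot y).mpr ?_)
          rcases hy with hy | hy
          · left
            rw [Set.mem_singleton_iff.mp hy]
            exact hprim.pow_eq_one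
          · right
            simpa using hy
      exact hle hx'
    · rw [IntermediateField.adjoin_le_iff]
      intro z hz
      show z ∈ kummerField K (fun i => (α i : ℂ)) n t
      have hle : IntermediateField.adjoin ℚ (({primRoot n} : Set ℂ) ∪
          ⋃ i, {z : ℂ | z ^ (t i) = α i}) ≤
        kummerField K (fun i => (α i : ℂ)) n t := le_sup_right
      apply hle
      rcases (hroot z).mp hz with h | h
      · obtain ⟨k, _, rfl⟩ := hprim.eq_pow_of_pow_eq_one h
        refine pow_mem ?_ k
        exact IntermediateField.subset_adjoin _ _ (Or.inl rfl)
      · refine IntermediateField.subset_adjoin _ _ (Or.inr ?_)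
        simpa using h
  rw [hE]
  have hs : p.IsSplittingField K (IntermediateField.adjoin K (p.rootSet ℂ)) :=
    IntermediateField.adjoin_rootSet_isSplittingField (IsAlgClosed.splits _)
  have hfd : FiniteDimensional K (IntermediateField.adjoin K (p.rootSet ℂ)) :=
    Polynomial.IsSplittingField.finiteDimensional _ p
  have hnorm : Normal K (IntermediateField.adjoin K (p.rootSet ℂ)) :=
    Normal.of_isSplittingField p
  exact ⟨hfd, { }⟩

/-- Let `K ⊆ ℂ` be a number field and `α_1,…,α_r ∈ K^×` multiplicatively
independent. There is a positive integer `B` such that for all positive integers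
`n, t_1,…,t_r` with `t_i ∣ n` for all `i`, one has
`[K:ℚ]·B·[K(ζ_n, α_1^{1/t_1},…,α_r^{1/t_r}) : K] ≥ φ(n)·t_1⋯t_r`. -/
theorem kummer_degree_lower_bound {r : ℕ} (K : IntermediateField ℚ ℂ)
    [FiniteDimensional ℚ K] (α : Fin r → ℂ)
    (hmem : ∀ i, α i ∈ K) (hα0 : ∀ i, α i ≠ 0)
    (hind : ∀ e : Fin r → ℤ, ∏ i, α i ^ e i = 1 → e = 0) :
    ∃ B : ℕ, 0 < B ∧ ∀ (n : ℕ) (t : Fin r → ℕ), 0 < n → (∀ i, 0 < t i) →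
      (∀ i, t i ∣ n) →
      Nat.totient n * ∏ i, t i ≤
        Module.finrank ℚ K * B *
          Module.finrank K (IntermediateField.extendScalars (base_le_kummer K α n t)) := by
  have : NumberField K := 
    { to_charZero := inferInstance
      to_finiteDimensional := by
        convert ‹FiniteDimensional ℚ K› }
  obtain ⟨B, hB, h⟩ := aux_bound (F := K) (fun i => ⟨α i, hmem i⟩)
    (fun i h => hα0 i (congrArg Subtype.val h)) (fun e he => hind e (by
      have := congrArg (algebraMap K ℂ) he
      simpa [map_prod, map_zpow₀] using this))
  refine ⟨B, hB, fun n t hn ht htn => ?_⟩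
  obtain ⟨h1, h2⟩ := aux_galois K (fun i => ⟨α i, hmem i⟩) n t hn ht
  have hroots : ∀ i, ∃ z : ℂ, z ^ t i = α i := fun i => IsAlgClosed.exists_pow_nat_eq _ (ht i)
  choose β hβ using hroots
  have hle : IntermediateField.adjoin ℚ (({primRoot n} : Set ℂ) ∪
          ⋃ i, {z : ℂ | z ^ (t i) = α i}) ≤
        kummerField K α n t := le_sup_right
  have hζmem : primRoot n ∈ IntermediateField.extendScalars (base_le_kummer K α n t) :=
    hle (IntermediateField.subset_adjoin _ _ (Or.inl rfl))
  have hβmem : ∀ i, β i ∈ IntermediateField.extendScalars (base_le_kummer K α n t) := fun i =>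
    hle (IntermediateField.subset_adjoin _ _ (Or.inr (Set.mem_iUnion.mpr ⟨i, hβ i⟩)))
  have hprim : IsPrimitiveRoot (primRoot n) n := Complex.isPrimitiveRoot_exp n hn.ne'
  have key := @h (IntermediateField.extendScalars (base_le_kummer K α n t)) _ _ h1 h2 n t
    ⟨primRoot n, hζmem⟩ (fun i => ⟨β i, hβmem i⟩) hn ht htn
    ((IsPrimitiveRoot.map_iff_of_injective (algebraMap (IntermediateField.extendScalars
      (base_le_kummer K α n t)) ℂ).injective).mp hprim)
    (fun i => Subtype.ext (hβ i))
  convert key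
end
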